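/- Let q and K be positive integers and let t be a real number with 0 < t and 1/t > 2(qK−1) + q. Then W_{1/q}(qK, t) = ( √(2πt) / ( Γ(1/t) · (et)^{1/t} ) )^K · ( ∏_{l=1}^{K} ∏_{j=1}^{ql} (1 − jt) ) / ( ∏_{j=1}^{K} (1 − tqj) ). -/

import Mathlib

open MeasureTheory

/-- `W_γ(N,t)`: the ratio of the Mehta-type integral
`∫_{ℝ^N} ∏_{i<j} |λ_j - λ_i|^{2γ} ∏_j e^{-iγλ_j/√t} (1 - i√t λ_j)^{-γ/t} dλ`
to the Gaussian integral
`∫_{ℝ^N} ∏_{i<j} |λ_j - λ_i|^{2γ} e^{-(γ/2)∑_j λ_j²} dλ`. -/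
noncomputable def W (γ : ℝ) (N : ℕ) (t : ℝ) : ℂ :=
    (∫ l : Fin N → ℝ,
        (∏ i : Fin N, ∏ j ∈ Finset.Ioi i, ((|l j - l i| ^ (2 * γ) : ℝ) : ℂ)) *
          ∏ j : Fin N,
            Complex.exp (-(Complex.I * γ * (l j) / Real.sqrt t)) *
              (1 - Complex.I * Real.sqrt t * (l j)) ^ ((-(γ / t) : ℝ) : ℂ)) /
      ((∫ l : Fin N → ℝ,
          (∏ i : Fin N, ∏ j ∈ Finset.Ioi i, |l j - l i| ^ (2 * γ)) *
            Real.exp (-(γ / 2) * ∑ j, (l j) ^ 2) : ℝ) : ℂ)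

/-!
The proof is Aomoto's method. Put `z_j = 1 - i x_j` and, for a set `S` of `k` of the `N` indices,

`I_{α,β}(S) = ∫ ∏_{j ∈ S} z_j ∏_{i<j} |x_j - x_i|^{2γ} ∏_j e^{β z_j} z_j^{-α} dx`.

For `a ∉ S`, the `x_a`-derivative of the integrand of `I_{α,β}(S ∪ {a})` integrates to zero.
Symmetrising its terms `1 / (x_a - x_j)` under `x_a ↔ x_j` leaves nothing for `j ∈ S` and half of
`-i I_{α,β}(S)` for `j ∉ S`, so that

`β I_{α,β}(S ∪ {a}) = (α - 1 - γ (N - 1 - k)) I_{α,β}(S)`.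

Iterating from `∅` to the full set, where `I_{α+1,β}` reduces to `I_{α,β}(∅)`, shifts `α` by one.
The case `S = ∅` is a differential equation in `β` and makes `I_{α,β}(∅)` a power of `β`. On the
diagonal `α = β = γ s` the two combine into a first-order recurrence between `W_γ(N, 1/s)` and
`W_γ(N, 1/(s + 1/γ))`. For `γ = 1/q` and `N = qK` the asserted closed form obeys the same
recurrence, and along `s + qn` both sides tend to `1`: the numerator of `W` becomes Gaussian, and
the closed form is governed by Stirling's formula.
-/

/-! ### Symmetry and integration by parts on `ι → ℝ` -/

section

variable {ι : Type*}

lemma map_swap_insert_of_mem [DecidableEq ι] {S : Finset ι} {a j : ι} (hj : j ∈ S) :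
    (insert a S).map (Equiv.swap a j).toEmbedding = insert a S :=
  Finset.map_perm fun i hi ↦ by
    obtain rfl | rfl := (Equiv.swap_apply_ne_self_iff.1 hi).2 <;> simp [hj]

lemma map_swap_insert_of_notMem [DecidableEq ι] {S : Finset ι} {a j : ι} (ha : a ∉ S)
    (hj : j ∉ S) : (insert a S).map (Equiv.swap a j).toEmbedding = insert j S := by
  have hS : S.map (Equiv.swap a j).toEmbedding = S := by
    refine Finset.map_eq_of_subset fun i hi ↦ ?_
    obtain ⟨k, hk, rfl⟩ := Finset.mem_map.1 hi
    rwa [Equiv.coe_toEmbedding, Equiv.swap_apply_of_ne_of_ne (ne_of_mem_of_not_mem hk ha)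
      (ne_of_mem_of_not_mem hk hj)]
  rw [Finset.map_insert, hS, Equiv.coe_toEmbedding, Equiv.swap_apply_left]

variable [Fintype ι]

lemma two_mul_integral_eq_integral_add_comp_perm (σ : Equiv.Perm ι) {f : (ι → ℝ) → ℂ}
    (hf : Integrable f) : 2 * ∫ x, f x = ∫ x, (f x + f (x ∘ σ)) := by
  let e : (ι → ℝ) ≃ᵐ (ι → ℝ) := MeasurableEquiv.arrowCongr' σ.symm (MeasurableEquiv.refl ℝ)
  have he : MeasurePreserving e :=
    volume_preserving_arrowCongr' σ.symm (MeasurableEquiv.refl ℝ) (.id volume)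
  have hfe : Integrable fun x ↦ f (e x) :=
    (he.integrable_comp_emb e.measurableEmbedding).2 hf
  calc 2 * ∫ x, f x = (∫ x, f x) + ∫ x, f (e x) := by rw [he.integral_comp', two_mul]
    _ = ∫ x, (f x + f (x ∘ σ)) := (integral_add hf hfe).symm

variable [DecidableEq ι]

lemma prod_prod_compl_singleton_const_rpow {s : ℝ} (hs : 0 < s) (p : ℝ) :
    ∏ i : ι, ∏ _j ∈ ({i}ᶜ : Finset ι), s ^ p =
      s ^ (p * (Fintype.card ι * (Fintype.card ι - 1))) := by
  rcases isEmpty_or_nonempty ι with h | h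
  · simp
  have hcard : 1 ≤ Fintype.card ι := Fintype.card_pos
  simp only [Finset.prod_const, Finset.card_compl, Finset.card_singleton, Finset.card_univ]
  rw [← Real.rpow_natCast, ← Real.rpow_natCast, ← Real.rpow_mul hs.le, ← Real.rpow_mul hs.le]
  push_cast [hcard]
  ring_nf

lemma prod_prod_compl_singleton_mul {M : Type*} [CommMonoid M] (f : ι → M) :
    ∏ i, ∏ j ∈ {i}ᶜ, f i * f j = ∏ i, f i ^ (2 * (Fintype.card ι - 1)) := by
  have hswap : ∏ i, ∏ j ∈ {i}ᶜ, f j = ∏ j, ∏ _i ∈ ({j}ᶜ : Finset ι), f j :=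
    Finset.prod_comm' (by simp [eq_comm])
  simp only [Finset.prod_mul_distrib, hswap, Finset.prod_const, Finset.card_compl,
    Finset.card_singleton, two_mul, pow_add]

lemma prod_prod_compl_singleton_of_symm {M : Type*} [CommMonoid M] {f : ι → ι → M}
    (hf : ∀ i j, f i j = f j i) (a : ι) :
    ∏ i, ∏ j ∈ {i}ᶜ, f i j =
      (∏ j ∈ {a}ᶜ, f a j) ^ 2 * ∏ i ∈ {a}ᶜ, ∏ j ∈ ({i}ᶜ : Finset ι).erase a, f i j := by
  have hrow (i : ι) (hi : i ∈ ({a}ᶜ : Finset ι)) :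
      ∏ j ∈ {i}ᶜ, f i j = f a i * ∏ j ∈ ({i}ᶜ : Finset ι).erase a, f i j := by
    rw [hf a i, Finset.mul_prod_erase _ _ (by simpa [eq_comm] using hi)]
  rw [Fintype.prod_eq_mul_prod_compl a, Finset.prod_congr rfl hrow, Finset.prod_mul_distrib, sq,
    mul_assoc]

lemma integral_eq_zero_of_hasDerivAt_update {E : Type*} [NormedAddCommGroup E] [NormedSpace ℝ E]
    {f f' : (ι → ℝ) → E} {a : ι} (hf : Integrable f) (hf' : Integrable f')
    (hderiv : ∀ x, HasDerivAt (fun u ↦ f (Function.update x a u)) (f' x) (x a)) :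
    ∫ x, f' x = 0 := by
  have hline (x : ι → ℝ) : HasLineDerivAt ℝ f (f' x) x (Pi.single a 1) := by
    have hupdate (u : ℝ) : x + u • Pi.single a 1 = Function.update x a (x a + u) := by
      ext j
      obtain rfl | hj := eq_or_ne j a <;> simp [*]
    simp only [HasLineDerivAt, hupdate]
    exact HasDerivAt.comp_const_add (x a) 0 (by simpa using hderiv x)
  have h := integral_bilinear_hasLineDerivAt_right_eq_neg_left_of_integrable
    (μ := (volume : Measure (ι → ℝ))) (f := fun _ ↦ (1 : ℝ)) (f' := fun _ ↦ 0)
    (B := ContinuousLinearMap.lsmul ℝ ℝ) (v := Pi.single a 1) (by simp) (by simpa using hf')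
    (by simpa using hf) (fun x _ ↦ by simpa [HasLineDerivAt] using hasDerivAt_const (0 : ℝ) (1 : ℝ))
    (fun x _ ↦ hline x)
  simpa using h

end

/-! ### Differential and difference equations of first order -/

section

open Filter Topology

lemma eq_div_rpow_mul_of_hasDerivAt {f : ℝ → ℂ} {m : ℝ}
    (hf : ∀ x > 0, HasDerivAt f (m / x * f x) x) {b c : ℝ} (hb : 0 < b) (hc : 0 < c) :
    f b = ((b / c) ^ m : ℝ) * f c := by
  have hderiv (x : ℝ) (hx : 0 < x) : HasDerivAt (fun y ↦ ((y ^ (-m) : ℝ) : ℂ) * f y) 0 x := by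
    have hpow := (Real.hasDerivAt_rpow_const (p := -m) (Or.inl hx.ne')).ofReal_comp
    refine (hpow.mul (hf x hx)).congr_deriv ?_
    rw [Real.rpow_sub_one hx.ne']
    push_cast
    ring
  have hconst : ((b ^ (-m) : ℝ) : ℂ) * f b = ((c ^ (-m) : ℝ) : ℂ) * f c :=
    isOpen_Ioi.is_const_of_deriv_eq_zero isPreconnected_Ioi
      (fun x hx ↦ (hderiv x hx).differentiableAt.differentiableWithinAt)
      (fun x hx ↦ (hderiv x hx).deriv) (Set.mem_Ioi.2 hb) (Set.mem_Ioi.2 hc)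
  have hone : b ^ m * b ^ (-m) = 1 := by rw [← Real.rpow_add hb, add_neg_cancel, Real.rpow_zero]
  calc f b = ((b ^ m * b ^ (-m) : ℝ) : ℂ) * f b := by rw [hone, Complex.ofReal_one, one_mul]
    _ = ((b ^ m * c ^ (-m) : ℝ) : ℂ) * f c := by
        rw [Complex.ofReal_mul, Complex.ofReal_mul, mul_assoc, hconst, mul_assoc]
    _ = ((b / c) ^ m : ℝ) * f c := by
        rw [Real.div_rpow hb.le hc.le, Real.rpow_neg hc.le, div_eq_mul_inv]

lemma tendsto_add_mul_natCast_atTop {b : ℝ} (hb : 0 < b) (a : ℝ) :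
    Tendsto (fun n : ℕ ↦ a + b * n) atTop atTop :=
  tendsto_atTop_add_const_left _ _ (tendsto_natCast_atTop_atTop.const_mul_atTop hb)

lemma eq_prod_range_mul_of_forall_eq_mul_succ {M : Type*} [CommMonoid M] {a c : ℕ → M}
    (ha : ∀ n, a n = c n * a (n + 1)) (n : ℕ) : a 0 = (∏ k ∈ Finset.range n, c k) * a n := by
  induction n with
  | zero => simp
  | succ n ih => rw [Finset.prod_range_succ, mul_assoc, ← ha, ← ih]

lemma eq_of_forall_eq_mul_succ_of_tendsto_one {M : Type*} [CommMonoid M] [TopologicalSpace M]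
    [ContinuousMul M] [T2Space M] {a b c : ℕ → M} (ha : ∀ n, a n = c n * a (n + 1))
    (hb : ∀ n, b n = c n * b (n + 1)) (ha1 : Tendsto a atTop (𝓝 1))
    (hb1 : Tendsto b atTop (𝓝 1)) : a 0 = b 0 := by
  have hcross (n : ℕ) : a 0 * b n = b 0 * a n := by
    rw [eq_prod_range_mul_of_forall_eq_mul_succ ha n,
      eq_prod_range_mul_of_forall_eq_mul_succ hb n, mul_right_comm]
  have hleft := hb1.const_mul (a 0)
  have hright := ha1.const_mul (b 0)
  rw [mul_one] at hleft hright
  exact tendsto_nhds_unique (hleft.congr hcross) hright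

end

/-! ### The moments of Aomoto's method -/

section

open Filter Topology

/-- The line `{z | re z = 1}`, parametrised by its height (downwards): the integrals below are
integrals over powers of this line. -/
noncomputable def verticalLine (x : ℝ) : ℂ := 1 - Complex.I * x

/-- The one-variable weight `e^{βz} z^{-α}` on the line `re z = 1`; it is the integrand of Hankel's
formula for `1 / Γ(α)`. -/
noncomputable def hankelWeight (α β x : ℝ) : ℂ :=
  Complex.exp (β * verticalLine x) * verticalLine x ^ ((-α : ℝ) : ℂ)

lemma verticalLine_mem_slitPlane (x : ℝ) : verticalLine x ∈ Complex.slitPlane :=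
  Or.inl (by simp [verticalLine])

lemma verticalLine_ne_zero (x : ℝ) : verticalLine x ≠ 0 :=
  Complex.slitPlane_ne_zero (verticalLine_mem_slitPlane x)

lemma continuous_verticalLine : Continuous verticalLine := by
  unfold verticalLine; fun_prop

lemma norm_verticalLine (x : ℝ) : ‖verticalLine x‖ = (1 + x ^ 2) ^ (1 / 2 : ℝ) := by
  rw [← Real.sqrt_eq_rpow, Complex.norm_def]
  congr 1
  simp only [verticalLine, Complex.normSq_apply, Complex.sub_re, Complex.one_re, Complex.mul_re,
    Complex.I_re, Complex.ofReal_re, Complex.I_im, Complex.ofReal_im, Complex.sub_im,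
    Complex.one_im, Complex.mul_im]
  ring

lemma continuous_hankelWeight (α β : ℝ) : Continuous (hankelWeight α β) := by
  have hz := continuous_verticalLine
  exact (by fun_prop : Continuous fun x ↦ Complex.exp (β * verticalLine x)).mul
    (hz.cpow continuous_const verticalLine_mem_slitPlane)

lemma norm_hankelWeight (α β x : ℝ) :
    ‖hankelWeight α β x‖ = Real.exp β * (1 + x ^ 2) ^ (-α / 2) := by
  rw [hankelWeight, norm_mul, Complex.norm_cpow_real, Complex.norm_exp, norm_verticalLine,
    ← Real.rpow_mul (by positivity)]
  congr 2
  · simp [verticalLine]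
  · ring

lemma verticalLine_mul_hankelWeight_add_one (α β x : ℝ) :
    verticalLine x * hankelWeight (α + 1) β x = hankelWeight α β x := by
  have hα : ((-α : ℝ) : ℂ) = ((-(α + 1) : ℝ) : ℂ) + 1 := by push_cast; ring
  rw [hankelWeight, hankelWeight, hα, Complex.cpow_add _ _ (verticalLine_ne_zero x),
    Complex.cpow_one]
  ring

lemma hasDerivAt_verticalLine (x : ℝ) : HasDerivAt verticalLine (-Complex.I) x :=
  (((hasDerivAt_id x).ofReal_comp.const_mul Complex.I).const_sub 1).congr_deriv (by simp)

lemma hasDerivAt_verticalLine_mul_hankelWeight (α β x : ℝ) :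
    HasDerivAt (fun u ↦ verticalLine u * hankelWeight α β u)
      (-Complex.I * ((1 - α) * hankelWeight α β x +
        β * (verticalLine x * hankelWeight α β x))) x := by
  have hz := hasDerivAt_verticalLine x
  have hexp : HasDerivAt (fun u ↦ Complex.exp (β * verticalLine u))
      (Complex.exp (β * verticalLine x) * (β * -Complex.I)) x := (hz.const_mul (β : ℂ)).cexp
  have hpow : HasDerivAt (fun u ↦ verticalLine u ^ ((-α : ℝ) : ℂ))
      (((-α : ℝ) : ℂ) * verticalLine x ^ (((-α : ℝ) : ℂ) - 1) * -Complex.I) x :=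
    (((hasDerivAt_id (verticalLine x)).cpow_const (verticalLine_mem_slitPlane x)).scomp x
      hz).congr_deriv (by rw [smul_eq_mul, mul_one, mul_comm]; rfl)
  refine (hz.mul (hexp.mul hpow)).congr_deriv ?_
  have hne := verticalLine_ne_zero x
  rw [Complex.cpow_sub _ _ hne, Complex.cpow_one]
  simp only [hankelWeight, Pi.mul_apply]
  field_simp
  push_cast
  ring

lemma hasDerivAt_hankelWeight_right (α β x : ℝ) :
    HasDerivAt (fun b ↦ hankelWeight α b x) (verticalLine x * hankelWeight α β x) β := by
  have h := (((hasDerivAt_id β).ofReal_comp.mul_const (verticalLine x)).cexp).mul_const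
    (verticalLine x ^ ((-α : ℝ) : ℂ))
  refine h.congr_deriv ?_
  simp only [hankelWeight, id, Complex.ofReal_one]
  ring

variable {ι : Type*} [Fintype ι]

/-- A function dominating `aomotoIntegrand γ ε α β S` for all `S` and all `0 ≤ ε ≤ 1`. -/
noncomputable def aomotoMajorant (γ α β : ℝ) (x : ι → ℝ) : ℝ :=
  (2 ^ (γ / 2 * (Fintype.card ι * (Fintype.card ι - 1))) * Real.exp β ^ Fintype.card ι) *
    ∏ j, (1 + x j ^ 2) ^ (-(α - 1 - 2 * γ * (Fintype.card ι - 1)) / 2)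

lemma integrable_aomotoMajorant {γ α : ℝ} (hα : 2 + 2 * γ * (Fintype.card ι - 1) < α) (β : ℝ) :
    Integrable (aomotoMajorant (ι := ι) γ α β) := by
  have h : Integrable fun u : ℝ ↦
      (1 + u ^ 2) ^ (-(α - 1 - 2 * γ * (Fintype.card ι - 1)) / 2) := by
    simpa only [Real.norm_eq_abs, sq_abs] using
      integrable_rpow_neg_one_add_norm_sq (E := ℝ) (μ := volume)
        (r := α - 1 - 2 * γ * (Fintype.card ι - 1))
        (by rw [Module.finrank_self, Nat.cast_one]; linarith)
  exact (Integrable.fintype_prod fun _ ↦ h).const_mul _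

lemma aomotoMajorant_mono_right (γ α : ℝ) (x : ι → ℝ) :
    Monotone fun β ↦ aomotoMajorant γ α β x := fun β β' h ↦ by
  dsimp only [aomotoMajorant]; gcongr

variable [DecidableEq ι]

/-- The weight `∏_{i<j} |x_j - x_i|^{2γ}`, regularised by `|d| ↦ (d² + ε)^{1/2}` so as to be
differentiable. The product runs over ordered pairs, whence the exponent `γ / 2` of a square. -/
noncomputable def regVandermonde (γ ε : ℝ) (x : ι → ℝ) : ℝ :=
  ∏ i, ∏ j ∈ {i}ᶜ, ((x j - x i) ^ 2 + ε) ^ (γ / 2)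

/-- The integrand of Aomoto's method: the Selberg-type weight multiplied by the monomial
`∏_{j ∈ S} z_j` in `z_j = verticalLine (x j)`. -/
noncomputable def aomotoIntegrand (γ ε α β : ℝ) (S : Finset ι) (x : ι → ℝ) : ℂ :=
  (∏ j ∈ S, verticalLine (x j)) * (regVandermonde γ ε x * ∏ j, hankelWeight α β (x j))

/-- The Selberg-type moments related to one another by Aomoto's method. -/
noncomputable def aomotoIntegral (γ ε α β : ℝ) (S : Finset ι) : ℂ :=
  ∫ x : ι → ℝ, aomotoIntegrand γ ε α β S x

lemma regVandermonde_nonneg (γ : ℝ) {ε : ℝ} (hε : 0 ≤ ε) (x : ι → ℝ) :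
    0 ≤ regVandermonde γ ε x := by
  unfold regVandermonde; positivity

lemma continuous_regVandermonde_uncurry {γ : ℝ} (hγ : 0 ≤ γ) :
    Continuous (Function.uncurry (regVandermonde (ι := ι) γ)) :=
  continuous_finsetProd _ fun i _ ↦ continuous_finsetProd _ fun j _ ↦
    Continuous.rpow_const (by fun_prop) fun _ ↦ Or.inr (by positivity)

lemma regVandermonde_le {γ ε : ℝ} (hγ : 0 ≤ γ) (hε : 0 ≤ ε) (hε1 : ε ≤ 1) (x : ι → ℝ) :
    regVandermonde γ ε x ≤ 2 ^ (γ / 2 * (Fintype.card ι * (Fintype.card ι - 1))) *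
      ∏ j, (1 + x j ^ 2) ^ (γ * (Fintype.card ι - 1)) := by
  have hpair (i j : ι) : ((x j - x i) ^ 2 + ε) ^ (γ / 2) ≤
      2 ^ (γ / 2) * ((1 + x i ^ 2) ^ (γ / 2) * (1 + x j ^ 2) ^ (γ / 2)) := by
    rw [← Real.mul_rpow (by positivity) (by positivity),
      ← Real.mul_rpow (by positivity) (by positivity)]
    refine Real.rpow_le_rpow (by positivity) ?_ (by positivity)
    nlinarith [sq_nonneg (x i + x j), sq_nonneg (x i * x j)]
  have hpow (i : ι) : ((1 + x i ^ 2) ^ (γ / 2)) ^ (2 * (Fintype.card ι - 1)) =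
      (1 + x i ^ 2) ^ (γ * (Fintype.card ι - 1)) := by
    have hcard : 1 ≤ Fintype.card ι := Fintype.card_pos_iff.2 ⟨i⟩
    rw [← Real.rpow_natCast, ← Real.rpow_mul (by positivity)]
    push_cast [hcard]
    ring_nf
  calc regVandermonde γ ε x
      ≤ ∏ i, ∏ j ∈ {i}ᶜ, 2 ^ (γ / 2) * ((1 + x i ^ 2) ^ (γ / 2) * (1 + x j ^ 2) ^ (γ / 2)) :=
        Finset.prod_le_prod (fun i _ ↦ by positivity) fun i _ ↦
          Finset.prod_le_prod (fun j _ ↦ by positivity) fun j _ ↦ hpair i j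
    _ = _ := by
        rw [← prod_prod_compl_singleton_const_rpow two_pos,
          ← Finset.prod_congr rfl fun i _ ↦ hpow i, ← prod_prod_compl_singleton_mul,
          ← Finset.prod_mul_distrib]
        exact Finset.prod_congr rfl fun i _ ↦ Finset.prod_mul_distrib

lemma norm_aomotoIntegrand_le {γ ε : ℝ} (hγ : 0 ≤ γ) (hε : 0 ≤ ε) (hε1 : ε ≤ 1) (α β : ℝ)
    (S : Finset ι) (x : ι → ℝ) :
    ‖aomotoIntegrand γ ε α β S x‖ ≤ aomotoMajorant γ α β x := by
  have hpoly : ∏ j ∈ S, (1 + x j ^ 2) ^ (1 / 2 : ℝ) ≤ ∏ j, (1 + x j ^ 2) ^ (1 / 2 : ℝ) :=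
    Finset.prod_le_prod_of_subset_of_one_le (Finset.subset_univ S) (fun j _ ↦ by positivity)
      fun j _ _ ↦ Real.one_le_rpow (le_add_of_nonneg_right (sq_nonneg _)) (by norm_num)
  have hexponent (j : ι) : (1 + x j ^ 2) ^ (-(α - 1 - 2 * γ * (Fintype.card ι - 1)) / 2) =
      (1 + x j ^ 2) ^ (1 / 2 : ℝ) * ((1 + x j ^ 2) ^ (γ * (Fintype.card ι - 1)) *
        (1 + x j ^ 2) ^ (-α / 2)) := by
    rw [← Real.rpow_add (by positivity), ← Real.rpow_add (by positivity)]
    ring_nf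
  calc ‖aomotoIntegrand γ ε α β S x‖
      = (∏ j ∈ S, (1 + x j ^ 2) ^ (1 / 2 : ℝ)) *
          (regVandermonde γ ε x * ∏ j, Real.exp β * (1 + x j ^ 2) ^ (-α / 2)) := by
        simp only [aomotoIntegrand, norm_mul, norm_prod, Complex.norm_real, norm_verticalLine,
          norm_hankelWeight, Real.norm_of_nonneg (regVandermonde_nonneg γ hε x)]
    _ ≤ (∏ j, (1 + x j ^ 2) ^ (1 / 2 : ℝ)) *
          ((2 ^ (γ / 2 * (Fintype.card ι * (Fintype.card ι - 1))) *
            ∏ j, (1 + x j ^ 2) ^ (γ * (Fintype.card ι - 1))) *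
            ∏ j, Real.exp β * (1 + x j ^ 2) ^ (-α / 2)) := by
        have := regVandermonde_nonneg γ hε x
        gcongr
        exact regVandermonde_le hγ hε hε1 x
    _ = aomotoMajorant γ α β x := by
        simp only [aomotoMajorant, hexponent, Finset.prod_mul_distrib, Finset.prod_const,
          Finset.card_univ]
        ring

lemma continuous_aomotoIntegrand {γ : ℝ} (hγ : 0 ≤ γ) (ε α β : ℝ) (S : Finset ι) :
    Continuous (aomotoIntegrand γ ε α β S) := by
  have hz := continuous_verticalLine
  have hw := continuous_hankelWeight α β
  have hV : Continuous (regVandermonde (ι := ι) γ ε) :=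
    (continuous_regVandermonde_uncurry hγ).uncurry_left ε
  exact (continuous_finsetProd S fun j _ ↦ hz.comp (continuous_apply j)).mul
    ((Complex.continuous_ofReal.comp hV).mul
      (continuous_finsetProd _ fun j _ ↦ hw.comp (continuous_apply j)))

lemma integrable_aomotoIntegrand {γ ε α : ℝ} (hγ : 0 ≤ γ) (hε : 0 ≤ ε) (hε1 : ε ≤ 1)
    (hα : 2 + 2 * γ * (Fintype.card ι - 1) < α) (β : ℝ) (S : Finset ι) :
    Integrable (aomotoIntegrand γ ε α β S) :=
  (integrable_aomotoMajorant hα β).mono'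
    (continuous_aomotoIntegrand hγ ε α β S).aestronglyMeasurable
    (.of_forall (norm_aomotoIntegrand_le hγ hε hε1 α β S))

/-- The regularisation `d / (d² + ε)` of `1 / d`, half the logarithmic derivative of `d² + ε`. -/
noncomputable def regInv (ε d : ℝ) : ℝ := d / (d ^ 2 + ε)

lemma regInv_neg (ε d : ℝ) : regInv ε (-d) = -regInv ε d := by
  rw [regInv, regInv, neg_sq, neg_div]

lemma continuous_regInv {ε : ℝ} (hε : 0 < ε) : Continuous (regInv ε) :=
  continuous_id.div (by fun_prop) fun d ↦ by positivity

lemma abs_regInv_le {ε : ℝ} (hε : 0 < ε) (d : ℝ) : |regInv ε d| ≤ 1 + ε⁻¹ := by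
  rw [regInv, abs_div, abs_of_pos (by positivity : 0 < d ^ 2 + ε), div_le_iff₀ (by positivity)]
  calc |d| ≤ d ^ 2 + 1 := by nlinarith [sq_nonneg (|d| - 1), sq_abs d, abs_nonneg d]
    _ ≤ d ^ 2 + 1 + (ε + ε⁻¹ * d ^ 2) := le_add_of_nonneg_right (by positivity)
    _ = (1 + ε⁻¹) * (d ^ 2 + ε) := by field_simp; ring

lemma regInv_mul_self_nonneg {ε : ℝ} (hε : 0 ≤ ε) (d : ℝ) : 0 ≤ regInv ε d * d := by
  rw [regInv, div_mul_eq_mul_div]; exact div_nonneg (mul_self_nonneg d) (by positivity)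

lemma regInv_mul_self_le_one {ε : ℝ} (hε : 0 ≤ ε) (d : ℝ) : regInv ε d * d ≤ 1 := by
  rw [regInv, div_mul_eq_mul_div]
  exact div_le_one_of_le₀ (by nlinarith) (by positivity)

lemma hasDerivAt_prod_sq_add_rpow {κ : Type*} (s : Finset κ) (y : κ → ℝ) (γ : ℝ) {ε : ℝ}
    (hε : 0 < ε) (u : ℝ) :
    HasDerivAt (fun u ↦ ∏ j ∈ s, ((u - y j) ^ 2 + ε) ^ γ)
      ((∏ j ∈ s, ((u - y j) ^ 2 + ε) ^ γ) * (2 * γ * ∑ j ∈ s, regInv ε (u - y j))) u := by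
  have hexp (v : ℝ) : ∏ j ∈ s, ((v - y j) ^ 2 + ε) ^ γ =
      Real.exp (∑ j ∈ s, Real.log ((v - y j) ^ 2 + ε) * γ) := by
    rw [Real.exp_sum]
    exact Finset.prod_congr rfl fun j _ ↦ Real.rpow_def_of_pos (by positivity) γ
  have hlog (j : κ) : HasDerivAt (fun v ↦ Real.log ((v - y j) ^ 2 + ε) * γ)
      (2 * γ * regInv ε (u - y j)) u := by
    have h := (((((hasDerivAt_id u).sub_const (y j)).fun_pow 2).add_const ε).log
      (by positivity)).mul_const γ
    refine h.congr_deriv ?_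
    simp only [regInv, id, Nat.cast_ofNat, Nat.add_one_sub_one, pow_one, mul_one]
    ring
  rw [Finset.mul_sum]
  simp only [hexp]
  exact (HasDerivAt.fun_sum fun j _ ↦ hlog j).exp

lemma regVandermonde_update (γ : ℝ) {ε : ℝ} (hε : 0 ≤ ε) (a : ι) (x : ι → ℝ) (u : ℝ) :
    regVandermonde γ ε (Function.update x a u) =
      (∏ j ∈ {a}ᶜ, ((u - x j) ^ 2 + ε) ^ γ) *
        ∏ i ∈ {a}ᶜ, ∏ j ∈ ({i}ᶜ : Finset ι).erase a, ((x j - x i) ^ 2 + ε) ^ (γ / 2) := by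
  rw [regVandermonde, prod_prod_compl_singleton_of_symm (fun i j ↦ by rw [← neg_sub, neg_sq]) a,
    ← Finset.prod_pow]
  congr 1
  · refine Finset.prod_congr rfl fun j hj ↦ ?_
    rw [Function.update_self, Function.update_of_ne (by simpa using hj), ← neg_sub, neg_sq,
      ← Real.rpow_mul_natCast (by positivity)]
    norm_num
  · refine Finset.prod_congr rfl fun i hi ↦ Finset.prod_congr rfl fun j hj ↦ ?_
    rw [Function.update_of_ne (Finset.ne_of_mem_erase hj),
      Function.update_of_ne (by simpa using hi)]

lemma hasDerivAt_regVandermonde_update (γ : ℝ) {ε : ℝ} (hε : 0 < ε) (a : ι) (x : ι → ℝ) :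
    HasDerivAt (fun u ↦ regVandermonde γ ε (Function.update x a u))
      (regVandermonde γ ε x * (2 * γ * ∑ j ∈ {a}ᶜ, regInv ε (x a - x j))) (x a) := by
  have hx := regVandermonde_update γ hε.le a x (x a)
  rw [Function.update_eq_self] at hx
  simp only [regVandermonde_update γ hε.le, hx]
  exact ((hasDerivAt_prod_sq_add_rpow {a}ᶜ x γ hε (x a)).mul_const _).congr_deriv (by ring)

lemma hasDerivAt_aomotoIntegrand_update (γ : ℝ) {ε : ℝ} (hε : 0 < ε) (α β : ℝ) {S : Finset ι}
    {a : ι} (ha : a ∉ S) (x : ι → ℝ) :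
    HasDerivAt (fun u ↦ aomotoIntegrand γ ε α β (insert a S) (Function.update x a u))
      (-Complex.I * ((1 - α) * aomotoIntegrand γ ε α β S x +
          β * aomotoIntegrand γ ε α β (insert a S) x) +
        2 * γ * ∑ j ∈ {a}ᶜ, regInv ε (x a - x j) * aomotoIntegrand γ ε α β (insert a S) x)
      (x a) := by
  set c : ℂ := (∏ j ∈ S, verticalLine (x j)) * ∏ j ∈ {a}ᶜ, hankelWeight α β (x j) with hc
  have hoff {T : Finset ι} (haT : a ∉ T) (f : ℝ → ℂ) (u : ℝ) :
      ∏ j ∈ T, f (Function.update x a u j) = ∏ j ∈ T, f (x j) :=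
    Finset.prod_congr rfl fun j hj ↦ by rw [Function.update_of_ne (ne_of_mem_of_not_mem hj haT)]
  have hsplit (u : ℝ) : aomotoIntegrand γ ε α β (insert a S) (Function.update x a u) =
      regVandermonde γ ε (Function.update x a u) *
        (verticalLine u * hankelWeight α β u) * c := by
    rw [aomotoIntegrand, Finset.prod_insert ha, Fintype.prod_eq_mul_prod_compl a,
      hoff ha, hoff (by simp), Function.update_self, hc]
    ring
  have hinsert := hsplit (x a)
  rw [Function.update_eq_self] at hinsert
  have hS : aomotoIntegrand γ ε α β S x = regVandermonde γ ε x * hankelWeight α β (x a) * c := by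
    rw [aomotoIntegrand, Fintype.prod_eq_mul_prod_compl a, hc]
    ring
  simp only [hsplit, hinsert, hS]
  have h := ((hasDerivAt_regVandermonde_update γ hε a x).ofReal_comp.mul
    (hasDerivAt_verticalLine_mul_hankelWeight α β (x a))).mul_const c
  refine h.congr_deriv ?_
  rw [Function.update_eq_self, ← Finset.sum_mul]
  push_cast
  ring

lemma regVandermonde_comp_perm (γ ε : ℝ) (σ : Equiv.Perm ι) (x : ι → ℝ) :
    regVandermonde γ ε (x ∘ σ) = regVandermonde γ ε x :=
  Fintype.prod_equiv σ _ _ fun i ↦ Finset.prod_equiv σ (by simp) (by simp)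

lemma aomotoIntegrand_comp_perm (γ ε α β : ℝ) (S : Finset ι) (σ : Equiv.Perm ι) (x : ι → ℝ) :
    aomotoIntegrand γ ε α β S (x ∘ σ) = aomotoIntegrand γ ε α β (S.map σ.toEmbedding) x := by
  simp only [aomotoIntegrand, regVandermonde_comp_perm, Finset.prod_map, Function.comp_apply,
    Equiv.coe_toEmbedding, Equiv.prod_comp σ fun j ↦ hankelWeight α β (x j)]

lemma aomotoIntegrand_insert (γ ε α β : ℝ) {S : Finset ι} {a : ι} (ha : a ∉ S) (x : ι → ℝ) :
    aomotoIntegrand γ ε α β (insert a S) x = verticalLine (x a) * aomotoIntegrand γ ε α β S x := by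
  rw [aomotoIntegrand, aomotoIntegrand, Finset.prod_insert ha, mul_assoc]

lemma regInv_mul_aomotoIntegrand_add_swap_of_mem (γ ε α β : ℝ) {S : Finset ι} {a j : ι}
    (hj : j ∈ S) (x : ι → ℝ) :
    regInv ε (x a - x j) * aomotoIntegrand γ ε α β (insert a S) x +
      regInv ε ((x ∘ Equiv.swap a j) a - (x ∘ Equiv.swap a j) j) *
        aomotoIntegrand γ ε α β (insert a S) (x ∘ Equiv.swap a j) = 0 := by
  rw [aomotoIntegrand_comp_perm, map_swap_insert_of_mem hj, Function.comp_apply,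
    Function.comp_apply, Equiv.swap_apply_left, Equiv.swap_apply_right, ← neg_sub (x a),
    regInv_neg]
  push_cast
  ring

lemma regInv_mul_aomotoIntegrand_add_swap_of_notMem (γ ε α β : ℝ) {S : Finset ι} {a j : ι}
    (ha : a ∉ S) (hj : j ∉ S) (x : ι → ℝ) :
    regInv ε (x a - x j) * aomotoIntegrand γ ε α β (insert a S) x +
      regInv ε ((x ∘ Equiv.swap a j) a - (x ∘ Equiv.swap a j) j) *
        aomotoIntegrand γ ε α β (insert a S) (x ∘ Equiv.swap a j) =
      -Complex.I * (((regInv ε (x a - x j) * (x a - x j) : ℝ) : ℂ) *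
        aomotoIntegrand γ ε α β S x) := by
  rw [aomotoIntegrand_comp_perm, map_swap_insert_of_notMem ha hj, Function.comp_apply,
    Function.comp_apply, Equiv.swap_apply_left, Equiv.swap_apply_right, ← neg_sub (x a),
    regInv_neg, aomotoIntegrand_insert _ _ _ _ ha, aomotoIntegrand_insert _ _ _ _ hj,
    verticalLine, verticalLine]
  push_cast
  ring

lemma integrable_regInv_mul_aomotoIntegrand {γ ε α : ℝ} (hγ : 0 ≤ γ) (hε : 0 < ε) (hε1 : ε ≤ 1)
    (hα : 2 + 2 * γ * (Fintype.card ι - 1) < α) (β : ℝ) (S : Finset ι) (a j : ι) :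
    Integrable fun x : ι → ℝ ↦ (regInv ε (x a - x j) : ℂ) * aomotoIntegrand γ ε α β S x := by
  refine (integrable_aomotoIntegrand hγ hε.le hε1 hα β S).bdd_mul (c := 1 + ε⁻¹) ?_
    (.of_forall fun x ↦ ?_)
  · have := continuous_regInv hε
    exact Continuous.aestronglyMeasurable (by fun_prop)
  · rw [Complex.norm_real]
    exact abs_regInv_le hε _

lemma integral_regInv_mul_aomotoIntegrand_of_mem {γ ε α : ℝ} (hγ : 0 ≤ γ) (hε : 0 < ε)
    (hε1 : ε ≤ 1) (hα : 2 + 2 * γ * (Fintype.card ι - 1) < α) (β : ℝ) {S : Finset ι} {a j : ι}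
    (hj : j ∈ S) :
    ∫ x : ι → ℝ, (regInv ε (x a - x j) : ℂ) * aomotoIntegrand γ ε α β (insert a S) x = 0 := by
  have h := two_mul_integral_eq_integral_add_comp_perm (Equiv.swap a j)
    (integrable_regInv_mul_aomotoIntegrand hγ hε hε1 hα β (insert a S) a j)
  simp only [regInv_mul_aomotoIntegrand_add_swap_of_mem _ _ _ _ hj, integral_zero] at h
  simpa using h

lemma two_mul_integral_regInv_mul_aomotoIntegrand_of_notMem {γ ε α : ℝ} (hγ : 0 ≤ γ) (hε : 0 < ε)
    (hε1 : ε ≤ 1) (hα : 2 + 2 * γ * (Fintype.card ι - 1) < α) (β : ℝ) {S : Finset ι} {a j : ι}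
    (ha : a ∉ S) (hj : j ∉ S) :
    2 * ∫ x : ι → ℝ, (regInv ε (x a - x j) : ℂ) * aomotoIntegrand γ ε α β (insert a S) x =
      -Complex.I * ∫ x : ι → ℝ, ((regInv ε (x a - x j) * (x a - x j) : ℝ) : ℂ) *
        aomotoIntegrand γ ε α β S x := by
  rw [two_mul_integral_eq_integral_add_comp_perm (Equiv.swap a j)
    (integrable_regInv_mul_aomotoIntegrand hγ hε hε1 hα β (insert a S) a j), ← integral_const_mul]
  simp only [regInv_mul_aomotoIntegrand_add_swap_of_notMem _ _ _ _ ha hj]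

lemma two_mul_sum_integral_regInv_mul_aomotoIntegrand {γ ε α : ℝ} (hγ : 0 ≤ γ) (hε : 0 < ε)
    (hε1 : ε ≤ 1) (hα : 2 + 2 * γ * (Fintype.card ι - 1) < α) (β : ℝ) {S : Finset ι} {a : ι}
    (ha : a ∉ S) :
    2 * ∑ j ∈ {a}ᶜ, ∫ x : ι → ℝ, (regInv ε (x a - x j) : ℂ) *
        aomotoIntegrand γ ε α β (insert a S) x =
      -Complex.I * ∑ j ∈ (insert a S)ᶜ, ∫ x : ι → ℝ,
        ((regInv ε (x a - x j) * (x a - x j) : ℝ) : ℂ) * aomotoIntegrand γ ε α β S x := by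
  rw [Finset.mul_sum, Finset.mul_sum]
  refine (Finset.sum_subset_zero_on_sdiff (Finset.compl_subset_compl.2 (by simp))
    (fun j hj ↦ ?_) fun j hj ↦ ?_).symm
  · have hjS : j ∈ S := by grind [Finset.mem_compl]
    rw [integral_regInv_mul_aomotoIntegrand_of_mem hγ hε hε1 hα β hjS, mul_zero]
  · have hjS : j ∉ S := by grind [Finset.mem_compl]
    rw [two_mul_integral_regInv_mul_aomotoIntegrand_of_notMem hγ hε hε1 hα β ha hjS]

lemma aomotoIntegral_insert_regularised {γ ε α : ℝ} (hγ : 0 ≤ γ) (hε : 0 < ε) (hε1 : ε ≤ 1)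
    (hα : 2 + 2 * γ * (Fintype.card ι - 1) < α) (β : ℝ) {S : Finset ι} {a : ι} (ha : a ∉ S) :
    (1 - α) * aomotoIntegral γ ε α β S + β * aomotoIntegral γ ε α β (insert a S) +
      γ * ∑ j ∈ (insert a S)ᶜ, ∫ x : ι → ℝ, ((regInv ε (x a - x j) * (x a - x j) : ℝ) : ℂ) *
        aomotoIntegrand γ ε α β S x = 0 := by
  have hS := (integrable_aomotoIntegrand hγ hε.le hε1 hα β S).const_mul (1 - α : ℂ)
  have hins := integrable_aomotoIntegrand hγ hε.le hε1 hα β (insert a S)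
  have hreg (j : ι) := integrable_regInv_mul_aomotoIntegrand hγ hε hε1 hα β (insert a S) a j
  have hsum := (integrable_finsetSum {a}ᶜ fun j _ ↦ hreg j).const_mul (2 * γ : ℂ)
  have hbulk : Integrable fun x ↦ -Complex.I * ((1 - α) * aomotoIntegrand γ ε α β S x +
      β * aomotoIntegrand γ ε α β (insert a S) x) :=
    (hS.add (hins.const_mul (β : ℂ))).const_mul (-Complex.I)
  have hibp := integral_eq_zero_of_hasDerivAt_update hins (hbulk.add hsum)
    (hasDerivAt_aomotoIntegrand_update γ hε α β ha)
  have hpairs := two_mul_sum_integral_regInv_mul_aomotoIntegrand hγ hε hε1 hα β ha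
  simp only [Pi.add_apply] at hibp
  rw [integral_add hbulk hsum, integral_const_mul, integral_const_mul,
    integral_add hS (hins.const_mul _), integral_const_mul, integral_const_mul,
    integral_finsetSum _ fun j _ ↦ hreg j] at hibp
  refine (mul_eq_zero.1 ?_).resolve_left (neg_ne_zero.2 Complex.I_ne_zero)
  simp only [aomotoIntegral]
  linear_combination hibp - (γ : ℂ) * hpairs

lemma ne_of_regVandermonde_zero_ne_zero {γ : ℝ} (hγ : γ ≠ 0) {x : ι → ℝ}
    (hx : regVandermonde γ 0 x ≠ 0) {i j : ι} (hij : i ≠ j) : x i ≠ x j := fun h ↦ by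
  have hrow := Finset.prod_ne_zero_iff.1 hx i (Finset.mem_univ i)
  have hfactor := Finset.prod_ne_zero_iff.1 hrow j (by simpa using hij.symm)
  exact hfactor (by rw [h, sub_self, add_zero, sq, zero_mul, Real.zero_rpow (by simpa using hγ)])

lemma tendsto_aomotoIntegrand {γ : ℝ} (hγ : 0 ≤ γ) (α β : ℝ) (S : Finset ι) (x : ι → ℝ) :
    Tendsto (fun ε ↦ aomotoIntegrand γ ε α β S x) (𝓝[>] 0) (𝓝 (aomotoIntegrand γ 0 α β S x)) := by
  have hV : Tendsto (fun ε ↦ regVandermonde γ ε x) (𝓝[>] 0) (𝓝 (regVandermonde γ 0 x)) :=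
    (((continuous_regVandermonde_uncurry hγ).uncurry_right x).tendsto 0).mono_left
      nhdsWithin_le_nhds
  exact (((Complex.continuous_ofReal.tendsto _).comp hV).mul_const _).const_mul _

lemma tendsto_regInv_mul_self {d : ℝ} (hd : d ≠ 0) :
    Tendsto (fun ε ↦ regInv ε d * d) (𝓝[>] 0) (𝓝 1) := by
  have h : ContinuousAt (fun ε ↦ regInv ε d * d) 0 :=
    (continuousAt_const.div (by fun_prop) (by positivity)).mul continuousAt_const
  have h0 : regInv 0 d * d = 1 := by rw [regInv, add_zero]; field_simp
  exact h0 ▸ h.tendsto.mono_left nhdsWithin_le_nhds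

lemma tendsto_integral_mul_aomotoIntegrand {γ α : ℝ} (hγ : 0 ≤ γ)
    (hα : 2 + 2 * γ * (Fintype.card ι - 1) < α) (β : ℝ) (S : Finset ι)
    {w : ℝ → (ι → ℝ) → ℝ} (hcont : ∀ ε > 0, Continuous (w ε)) (hbound : ∀ ε > 0, ∀ x, |w ε x| ≤ 1)
    (hlim : ∀ x, regVandermonde γ 0 x ≠ 0 → Tendsto (w · x) (𝓝[>] 0) (𝓝 1)) :
    Tendsto (fun ε ↦ ∫ x, (w ε x : ℂ) * aomotoIntegrand γ ε α β S x) (𝓝[>] 0)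
      (𝓝 (aomotoIntegral γ 0 α β S)) := by
  have hle (ε : ℝ) (hε : 0 < ε) (x : ι → ℝ) :
      ‖(w ε x : ℂ) * aomotoIntegrand γ ε α β S x‖ ≤ ‖aomotoIntegrand γ ε α β S x‖ := by
    rw [norm_mul, Complex.norm_real]
    exact mul_le_of_le_one_left (norm_nonneg _) (hbound ε hε x)
  have hpos : ∀ᶠ ε : ℝ in 𝓝[>] 0, 0 < ε := self_mem_nhdsWithin
  refine tendsto_integral_filter_of_dominated_convergence (aomotoMajorant γ α β) ?_ ?_
    (integrable_aomotoMajorant hα β) (.of_forall fun x ↦ ?_)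
  · filter_upwards [hpos] with ε hε
    exact ((Complex.continuous_ofReal.comp (hcont ε hε)).mul
      (continuous_aomotoIntegrand hγ ε α β S)).aestronglyMeasurable
  · filter_upwards [Ioc_mem_nhdsGT zero_lt_one] with ε hε
    exact .of_forall fun x ↦
      (hle ε hε.1 x).trans (norm_aomotoIntegrand_le hγ hε.1.le hε.2 α β S x)
  · have hG := tendsto_aomotoIntegrand hγ α β S x
    by_cases hx : regVandermonde γ 0 x = 0
    · have hG0 : aomotoIntegrand γ 0 α β S x = 0 := by simp [aomotoIntegrand, hx]
      rw [hG0] at hG ⊢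
      exact squeeze_zero_norm' (hpos.mono fun ε hε ↦ hle ε hε x) (by simpa using hG.norm)
    · simpa using ((Complex.continuous_ofReal.tendsto _).comp (hlim x hx)).mul hG

lemma tendsto_aomotoIntegral {γ α : ℝ} (hγ : 0 ≤ γ)
    (hα : 2 + 2 * γ * (Fintype.card ι - 1) < α) (β : ℝ) (S : Finset ι) :
    Tendsto (fun ε ↦ aomotoIntegral γ ε α β S) (𝓝[>] 0) (𝓝 (aomotoIntegral γ 0 α β S)) := by
  simpa [aomotoIntegral] using tendsto_integral_mul_aomotoIntegrand hγ hα β S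
    (w := fun _ _ ↦ 1) (fun _ _ ↦ continuous_const) (by simp) fun _ _ ↦ tendsto_const_nhds

lemma tendsto_integral_regInv_mul_self_mul_aomotoIntegrand {γ α : ℝ} (hγ : 0 < γ)
    (hα : 2 + 2 * γ * (Fintype.card ι - 1) < α) (β : ℝ) (S : Finset ι) {a j : ι} (haj : a ≠ j) :
    Tendsto (fun ε ↦ ∫ x : ι → ℝ, ((regInv ε (x a - x j) * (x a - x j) : ℝ) : ℂ) *
      aomotoIntegrand γ ε α β S x) (𝓝[>] 0) (𝓝 (aomotoIntegral γ 0 α β S)) := by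
  refine tendsto_integral_mul_aomotoIntegrand hγ.le hα β S (fun ε hε ↦ ?_) (fun ε hε x ↦ ?_)
    fun x hx ↦ tendsto_regInv_mul_self
      (sub_ne_zero.2 (ne_of_regVandermonde_zero_ne_zero hγ.ne' hx haj))
  · have := continuous_regInv hε
    fun_prop
  · rw [abs_of_nonneg (regInv_mul_self_nonneg hε.le _)]
    exact regInv_mul_self_le_one hε.le _

lemma mul_aomotoIntegral_insert {γ α : ℝ} (hγ : 0 < γ)
    (hα : 2 + 2 * γ * (Fintype.card ι - 1) < α) (β : ℝ) {S : Finset ι} {a : ι} (ha : a ∉ S) :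
    β * aomotoIntegral γ 0 α β (insert a S) =
      (α - 1 - γ * (Fintype.card ι - 1 - S.card)) * aomotoIntegral γ 0 α β S := by
  have hpairs := tendsto_finsetSum (insert a S)ᶜ fun j hj ↦
    tendsto_integral_regInv_mul_self_mul_aomotoIntegrand hγ hα β S
      (ne_of_mem_of_not_mem (Finset.mem_insert_self a S) (Finset.mem_compl.1 hj))
  have hlim := (((tendsto_aomotoIntegral hγ.le hα β S).const_mul (1 - α : ℂ)).add
    ((tendsto_aomotoIntegral hγ.le hα β (insert a S)).const_mul (β : ℂ))).add
    (hpairs.const_mul (γ : ℂ))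
  have hzero := hlim.congr' (f₂ := fun _ ↦ 0) <| by
    filter_upwards [Ioc_mem_nhdsGT zero_lt_one] with ε hε
    exact aomotoIntegral_insert_regularised hγ.le hε.1 hε.2 hα β ha
  have hrel := tendsto_nhds_unique hzero tendsto_const_nhds
  have hcard : ((insert a S)ᶜ.card : ℂ) = Fintype.card ι - (S.card + 1 : ℕ) := by
    rw [Finset.card_compl, Finset.card_insert_of_notMem ha, Nat.cast_sub]
    exact Finset.card_insert_of_notMem ha ▸ Finset.card_le_univ (insert a S)
  rw [Finset.sum_const, nsmul_eq_mul, hcard] at hrel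
  push_cast at hrel
  linear_combination hrel

lemma pow_card_mul_aomotoIntegral {γ α : ℝ} (hγ : 0 < γ)
    (hα : 2 + 2 * γ * (Fintype.card ι - 1) < α) (β : ℝ) (S : Finset ι) :
    β ^ S.card * aomotoIntegral γ 0 α β S =
      (∏ k ∈ Finset.range S.card, (α - 1 - γ * (Fintype.card ι - 1 - k) : ℂ)) *
        aomotoIntegral γ 0 α β (∅ : Finset ι) := by
  induction S using Finset.induction_on with
  | empty => simp
  | insert a S ha ih =>
    rw [Finset.card_insert_of_notMem ha, Finset.prod_range_succ, pow_succ, mul_assoc,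
      mul_aomotoIntegral_insert hγ hα β ha]
    linear_combination (α - 1 - γ * (Fintype.card ι - 1 - S.card) : ℂ) * ih

lemma aomotoIntegral_add_one_univ (γ ε α β : ℝ) :
    aomotoIntegral γ ε (α + 1) β (Finset.univ : Finset ι) =
      aomotoIntegral γ ε α β (∅ : Finset ι) := by
  refine integral_congr_ae (.of_forall fun x ↦ ?_)
  simp only [aomotoIntegrand, mul_left_comm, ← Finset.prod_mul_distrib,
    verticalLine_mul_hankelWeight_add_one, Finset.prod_empty, one_mul]

lemma pow_card_mul_aomotoIntegral_empty {γ α : ℝ} (hγ : 0 < γ)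
    (hα : 1 + 2 * γ * (Fintype.card ι - 1) < α) (β : ℝ) :
    β ^ Fintype.card ι * aomotoIntegral γ 0 α β (∅ : Finset ι) =
      (∏ k ∈ Finset.range (Fintype.card ι), (α - γ * k : ℂ)) *
        aomotoIntegral γ 0 (α + 1) β (∅ : Finset ι) := by
  have h := pow_card_mul_aomotoIntegral (ι := ι) (α := α + 1) hγ (by linarith) β Finset.univ
  rw [aomotoIntegral_add_one_univ, Finset.card_univ] at h
  rw [h, ← Finset.prod_range_reflect]
  refine congrArg (· * _) (Finset.prod_congr rfl fun k hk ↦ ?_)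
  have hk' : k + 1 ≤ Fintype.card ι := Finset.mem_range.1 hk
  rw [Nat.cast_sub (by omega), Nat.cast_sub (by omega)]
  push_cast
  ring

lemma hasDerivAt_aomotoIntegrand_right (γ ε α β : ℝ) (x : ι → ℝ) :
    HasDerivAt (fun b ↦ aomotoIntegrand γ ε α b ∅ x) (∑ j, aomotoIntegrand γ ε α β {j} x) β := by
  have h := (((HasDerivAt.fun_finsetProd (u := Finset.univ) fun j _ ↦
    hasDerivAt_hankelWeight_right α β (x j)).const_mul (regVandermonde γ ε x : ℂ)).const_mul
      (∏ j ∈ ∅, verticalLine (x j)))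
  refine h.congr_deriv ?_
  simp only [aomotoIntegrand, Finset.prod_empty, one_mul, Finset.mul_sum, Finset.prod_singleton,
    smul_eq_mul]
  refine Finset.sum_congr rfl fun j _ ↦ ?_
  rw [← Finset.prod_erase_mul _ _ (Finset.mem_univ j)]
  ring

lemma hasDerivAt_aomotoIntegral_right {γ α : ℝ} (hγ : 0 ≤ γ)
    (hα : 2 + 2 * γ * (Fintype.card ι - 1) < α) (β : ℝ) :
    HasDerivAt (fun b ↦ aomotoIntegral γ 0 α b (∅ : Finset ι))
      (∑ j : ι, aomotoIntegral γ 0 α β {j}) β := by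
  have hbound (x : ι → ℝ) (b : ℝ) (hb : b ∈ Set.Iio (β + 1)) :
      ‖∑ j : ι, aomotoIntegrand γ 0 α b {j} x‖ ≤ ∑ _j : ι, aomotoMajorant γ α (β + 1) x :=
    (norm_sum_le _ _).trans <| Finset.sum_le_sum fun j _ ↦
      (norm_aomotoIntegrand_le hγ le_rfl zero_le_one α b {j} x).trans
        (aomotoMajorant_mono_right γ α x (Set.mem_Iio.1 hb).le)
  have h := (hasDerivAt_integral_of_dominated_loc_of_deriv_le (μ := volume)
    (F := fun b (x : ι → ℝ) ↦ aomotoIntegrand γ 0 α b ∅ x)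
    (Iio_mem_nhds (lt_add_one β))
    (.of_forall fun b ↦ (continuous_aomotoIntegrand hγ 0 α b ∅).aestronglyMeasurable)
    (integrable_aomotoIntegrand hγ le_rfl zero_le_one hα β ∅)
    (continuous_finsetSum _ fun j _ ↦
      continuous_aomotoIntegrand hγ 0 α β {j}).aestronglyMeasurable
    (.of_forall hbound)
    (integrable_finsetSum _ fun _ _ ↦ integrable_aomotoMajorant hα (β + 1))
    (.of_forall fun x b _ ↦ hasDerivAt_aomotoIntegrand_right γ 0 α b x)).2
  rwa [integral_finsetSum _ fun j _ ↦
    integrable_aomotoIntegrand hγ le_rfl zero_le_one hα β {j}] at h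

lemma aomotoIntegral_eq_div_rpow_mul {γ α : ℝ} (hγ : 0 < γ)
    (hα : 2 + 2 * γ * (Fintype.card ι - 1) < α) {b c : ℝ} (hb : 0 < b) (hc : 0 < c) :
    aomotoIntegral γ 0 α b (∅ : Finset ι) =
      ((b / c) ^ (Fintype.card ι * (α - 1 - γ * (Fintype.card ι - 1))) : ℝ) *
        aomotoIntegral γ 0 α c (∅ : Finset ι) := by
  refine eq_div_rpow_mul_of_hasDerivAt (f := fun β ↦ aomotoIntegral γ 0 α β ∅) (fun β hβ ↦ ?_) hb hc
  refine (hasDerivAt_aomotoIntegral_right hγ.le hα β).congr_deriv ?_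
  have hβ' : (β : ℂ) ≠ 0 := Complex.ofReal_ne_zero.2 hβ.ne'
  have hmoment (j : ι) : aomotoIntegral γ 0 α β {j} =
      (α - 1 - γ * (Fintype.card ι - 1)) / β * aomotoIntegral γ 0 α β (∅ : Finset ι) := by
    have h := mul_aomotoIntegral_insert hγ hα β (Finset.notMem_empty j)
    rw [insert_empty_eq, Finset.card_empty, Nat.cast_zero, sub_zero] at h
    rw [div_mul_eq_mul_div, eq_div_iff hβ', mul_comm, h]
  rw [Finset.sum_congr rfl fun j _ ↦ hmoment j, Finset.sum_const, Finset.card_univ, nsmul_eq_mul]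
  push_cast
  ring

lemma aomotoIntegral_self_eq_mul_add_one {γ α : ℝ} (hγ : 0 < γ) (hα0 : 0 < α)
    (hα : 1 + 2 * γ * (Fintype.card ι - 1) < α) :
    aomotoIntegral γ 0 α α (∅ : Finset ι) =
      ((α / (α + 1)) ^ (Fintype.card ι * (α - γ * (Fintype.card ι - 1))) *
          ∏ k ∈ Finset.range (Fintype.card ι), (1 - γ * k / α) : ℝ) *
        aomotoIntegral γ 0 (α + 1) (α + 1) (∅ : Finset ι) := by
  have hα' : (α : ℂ) ≠ 0 := Complex.ofReal_ne_zero.2 hα0.ne'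
  have hprod : (∏ k ∈ Finset.range (Fintype.card ι), (α - γ * k : ℂ)) =
      α ^ Fintype.card ι * ∏ k ∈ Finset.range (Fintype.card ι), (1 - γ * k / α : ℂ) := by
    rw [Finset.pow_eq_prod_const, ← Finset.prod_mul_distrib]
    exact Finset.prod_congr rfl fun k _ ↦ by field_simp
  have hexponent : α + 1 - 1 - γ * (Fintype.card ι - 1 : ℝ) = α - γ * (Fintype.card ι - 1) := by
    ring
  refine mul_left_cancel₀ (pow_ne_zero (Fintype.card ι) hα') ?_
  rw [pow_card_mul_aomotoIntegral_empty hγ hα, hprod,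
    aomotoIntegral_eq_div_rpow_mul hγ (α := α + 1) (by linarith) hα0 (by positivity : 0 < α + 1),
    hexponent]
  push_cast
  ring

end

/-! ### The Gaussian limit -/

section

open Filter Topology

/-- The factor `e^{-iγx/√t} (1 - i√t x)^{-γ/t}` in the numerator of `W`, as a function of
`s = 1 / t`. It tends to the Gaussian `e^{-γx²/2}` as `s → ∞`. -/
noncomputable def deformedGaussian (γ s x : ℝ) : ℂ :=
  Real.exp (-(γ * s)) * hankelWeight (γ * s) (γ * s) (x / √s)

lemma deformedGaussian_inv {t : ℝ} (γ : ℝ) (ht : 0 < t) (x : ℝ) :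
    deformedGaussian γ t⁻¹ x =
      Complex.exp (-(Complex.I * γ * x / √t)) *
        (1 - Complex.I * √t * x) ^ ((-(γ / t) : ℝ) : ℂ) := by
  have hline : verticalLine (x / √t⁻¹) = 1 - Complex.I * √t * x := by
    rw [verticalLine, Real.sqrt_inv, div_inv_eq_mul]
    push_cast
    ring
  have hexponent : -(γ / t : ℂ) + γ / t * (1 - Complex.I * √t * x) = -(Complex.I * γ * x / √t) := by
    have hsqrt : (√t : ℂ) ≠ 0 := Complex.ofReal_ne_zero.2 (Real.sqrt_pos.2 ht).ne'
    have hsq : (t : ℂ) = √t ^ 2 := by rw [← Complex.ofReal_pow, Real.sq_sqrt ht.le]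
    rw [hsq]
    field_simp
    ring
  rw [deformedGaussian, hankelWeight, hline, ← div_eq_mul_inv, ← mul_assoc, Complex.ofReal_exp,
    ← Complex.exp_add, ← hexponent]
  push_cast
  rfl

lemma continuous_deformedGaussian (γ s : ℝ) : Continuous (deformedGaussian γ s) :=
  continuous_const.mul ((continuous_hankelWeight _ _).comp (continuous_id.div_const _))

lemma norm_deformedGaussian (γ : ℝ) {s : ℝ} (hs : 0 < s) (x : ℝ) :
    ‖deformedGaussian γ s x‖ = ((1 + x ^ 2 / s) ^ s) ^ (-(γ / 2)) := by
  rw [deformedGaussian, norm_mul, Complex.norm_real, Real.norm_of_nonneg (Real.exp_nonneg _),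
    norm_hankelWeight, ← mul_assoc, ← Real.exp_add, neg_add_cancel, Real.exp_zero, one_mul,
    div_pow, Real.sq_sqrt hs.le, ← Real.rpow_mul (by positivity)]
  ring_nf

lemma norm_deformedGaussian_anti {γ s s' : ℝ} (hγ : 0 ≤ γ) (hs : 0 < s) (h : s ≤ s') (x : ℝ) :
    ‖deformedGaussian γ s' x‖ ≤ ‖deformedGaussian γ s x‖ := by
  have hs' : 0 < s' := hs.trans_le h
  have hbernoulli : 1 + x ^ 2 / s ≤ (1 + x ^ 2 / s') ^ (s' / s) := by
    have h' := one_add_mul_self_le_rpow_one_add (s := x ^ 2 / s') (p := s' / s)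
      (neg_one_lt_zero.le.trans (by positivity)) ((one_le_div hs).2 h)
    rwa [div_mul_div_comm, mul_comm s', mul_div_mul_right _ _ hs'.ne'] at h'
  have hmono : (1 + x ^ 2 / s) ^ s ≤ (1 + x ^ 2 / s') ^ s' := by
    calc (1 + x ^ 2 / s) ^ s ≤ ((1 + x ^ 2 / s') ^ (s' / s)) ^ s := by gcongr
      _ = (1 + x ^ 2 / s') ^ s' := by
          rw [← Real.rpow_mul (by positivity), div_mul_cancel₀ _ hs.ne']
  rw [norm_deformedGaussian γ hs, norm_deformedGaussian γ hs']
  exact Real.rpow_le_rpow_of_nonpos (by positivity) hmono (by linarith)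

lemma deformedGaussian_eq_exp (γ : ℝ) {s : ℝ} (hs : 0 < s) (x : ℝ) :
    deformedGaussian γ s x = Complex.exp (-(γ / 2) * x ^ 2 - γ * (s *
      (Complex.log (1 + -Complex.I * (x / √s)) -
        Complex.logTaylor 3 (-Complex.I * (x / √s))))) := by
  have hline : verticalLine (x / √s) = 1 + -Complex.I * (x / √s) := by
    rw [verticalLine]
    push_cast
    ring
  have hsq : (s : ℂ) * (-Complex.I * (x / √s)) ^ 2 = -x ^ 2 := by
    have hs' : (s : ℂ) ≠ 0 := Complex.ofReal_ne_zero.2 hs.ne'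
    rw [mul_pow, neg_sq, Complex.I_sq, div_pow, ← Complex.ofReal_pow (√s), Real.sq_sqrt hs.le]
    field_simp
  have hne := verticalLine_ne_zero (x / √s)
  rw [deformedGaussian, hankelWeight, Complex.cpow_def_of_ne_zero hne, hline, Complex.ofReal_exp,
    ← Complex.exp_add, ← Complex.exp_add]
  have htaylor (w : ℂ) : Complex.logTaylor 3 w = w - w ^ 2 / 2 := by
    simp only [Complex.logTaylor, Finset.sum_range_succ, Finset.sum_range_zero]
    norm_num
    ring
  rw [htaylor]
  push_cast
  congr 1
  linear_combination (γ / 2 : ℂ) * hsq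

lemma tendsto_deformedGaussian (γ x : ℝ) :
    Tendsto (fun s ↦ deformedGaussian γ s x) atTop (𝓝 (Real.exp (-(γ / 2) * x ^ 2))) := by
  let w (s : ℝ) : ℂ := -Complex.I * (x / √s)
  have hw : Tendsto w atTop (𝓝 0) := by
    have h : Tendsto (fun s ↦ x / √s) atTop (𝓝 0) :=
      tendsto_const_nhds.div_atTop Real.tendsto_sqrt_atTop
    simpa [w] using ((Complex.continuous_ofReal.tendsto 0).comp h).const_mul (-Complex.I)
  have hsq : (fun s ↦ w s ^ 2) =O[atTop] fun s ↦ ((s : ℂ))⁻¹ := by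
    refine .of_bound (x ^ 2) ?_
    filter_upwards [eventually_gt_atTop 0] with s hs
    simp [w, abs_of_pos hs, div_eq_mul_inv, mul_pow, hs.le]
  have hremainder : (fun s ↦ Complex.log (1 + w s) - Complex.logTaylor 3 (w s)) =o[atTop]
      fun s ↦ ((s : ℂ))⁻¹ :=
    (((Complex.log_sub_logTaylor_isBigO 2).trans_isLittleO
      (Asymptotics.isLittleO_pow_pow (by norm_num))).comp_tendsto hw).trans_isBigO hsq
  have hlim := ((hremainder.tendsto_div_nhds_zero.const_mul (γ : ℂ)).const_sub
    (-(γ / 2) * x ^ 2 : ℂ)).cexp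
  simp only [mul_zero, sub_zero] at hlim
  push_cast
  refine hlim.congr' ?_
  filter_upwards [eventually_gt_atTop 0] with s hs
  rw [deformedGaussian_eq_exp γ hs, div_inv_eq_mul, mul_comm (s : ℂ)]

variable {ι : Type*} [Fintype ι] [DecidableEq ι]

/-- The integrand of the numerator of `W`, at `t = 1 / s`. -/
noncomputable def deformedMehtaIntegrand (γ s : ℝ) (x : ι → ℝ) : ℂ :=
  regVandermonde γ 0 x * ∏ j, deformedGaussian γ s (x j)

/-- The integrand of Mehta's integral, which is the denominator of `W`. -/
noncomputable def mehtaIntegrand (γ : ℝ) (x : ι → ℝ) : ℝ :=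
  regVandermonde γ 0 x * ∏ j, Real.exp (-(γ / 2) * x j ^ 2)

lemma regVandermonde_smul (γ : ℝ) {r : ℝ} (hr : 0 < r) (x : ι → ℝ) :
    regVandermonde γ 0 (r • x) =
      r ^ (γ * (Fintype.card ι * (Fintype.card ι - 1))) * regVandermonde γ 0 x := by
  have hpair (i j : ι) : ((r • x) j - (r • x) i) ^ 2 + 0 = r ^ 2 * ((x j - x i) ^ 2 + 0) := by
    simp only [Pi.smul_apply, smul_eq_mul]
    ring
  have hpow : (r ^ 2) ^ (γ / 2) = r ^ γ := by
    rw [← Real.rpow_natCast, ← Real.rpow_mul hr.le]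
    ring_nf
  rw [← prod_prod_compl_singleton_const_rpow hr γ, regVandermonde, regVandermonde,
    ← Finset.prod_mul_distrib]
  refine Finset.prod_congr rfl fun i _ ↦ ?_
  rw [← Finset.prod_mul_distrib]
  refine Finset.prod_congr rfl fun j _ ↦ ?_
  rw [hpair, Real.mul_rpow (by positivity) (by positivity), hpow]

lemma deformedMehtaIntegrand_smul (γ : ℝ) {s : ℝ} (hs : 0 < s) (x : ι → ℝ) :
    deformedMehtaIntegrand γ s (√s • x) =
      (√s ^ (γ * (Fintype.card ι * (Fintype.card ι - 1))) *
          Real.exp (-(γ * s)) ^ Fintype.card ι : ℝ) *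
        aomotoIntegrand γ 0 (γ * s) (γ * s) ∅ x := by
  have hsqrt : 0 < √s := Real.sqrt_pos.2 hs
  have hfactor (u : ℝ) : deformedGaussian γ s (√s * u) =
      Real.exp (-(γ * s)) * hankelWeight (γ * s) (γ * s) u := by
    rw [deformedGaussian, mul_div_cancel_left₀ _ hsqrt.ne']
  simp only [deformedMehtaIntegrand, aomotoIntegrand, regVandermonde_smul γ hsqrt, Pi.smul_apply,
    smul_eq_mul, hfactor, Finset.prod_mul_distrib, Finset.prod_const, Finset.card_univ,
    Finset.prod_empty]
  push_cast
  ring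

lemma integral_deformedMehtaIntegrand (γ : ℝ) {s : ℝ} (hs : 0 < s) :
    ∫ x : ι → ℝ, deformedMehtaIntegrand γ s x =
      (√s ^ (Fintype.card ι + γ * (Fintype.card ι * (Fintype.card ι - 1))) *
          Real.exp (-(γ * s)) ^ Fintype.card ι : ℝ) *
        aomotoIntegral γ 0 (γ * s) (γ * s) (∅ : Finset ι) := by
  have hsqrt : 0 < √s := Real.sqrt_pos.2 hs
  have h := Measure.integral_comp_smul_of_nonneg volume
    (deformedMehtaIntegrand (ι := ι) γ s) (√s) (hR := hsqrt.le)
  rw [Module.finrank_fintype_fun_eq_card, eq_inv_smul_iff₀ (by positivity), ← Complex.coe_smul] at h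
  simp only [deformedMehtaIntegrand_smul γ hs, integral_const_mul] at h
  rw [← h, Real.rpow_add hsqrt, Real.rpow_natCast, smul_eq_mul, aomotoIntegral]
  push_cast
  ring

lemma continuous_deformedMehtaIntegrand {γ : ℝ} (hγ : 0 ≤ γ) (s : ℝ) :
    Continuous (deformedMehtaIntegrand (ι := ι) γ s) := by
  have hV := (continuous_regVandermonde_uncurry (ι := ι) hγ).uncurry_left 0
  have hg := continuous_deformedGaussian γ s
  exact (Complex.continuous_ofReal.comp hV).mul (continuous_finsetProd _ fun j _ ↦ by fun_prop)

lemma continuous_mehtaIntegrand {γ : ℝ} (hγ : 0 ≤ γ) :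
    Continuous (mehtaIntegrand (ι := ι) γ) :=
  ((continuous_regVandermonde_uncurry hγ).uncurry_left 0).mul (by fun_prop)

lemma mehtaIntegrand_nonneg (γ : ℝ) (x : ι → ℝ) : 0 ≤ mehtaIntegrand γ x :=
  mul_nonneg (regVandermonde_nonneg γ le_rfl x) (by positivity)

lemma integrable_deformedMehtaIntegrand {γ s : ℝ} (hγ : 0 ≤ γ) (hs : 0 < s)
    (h : 2 + 2 * γ * (Fintype.card ι - 1) < γ * s) :
    Integrable (deformedMehtaIntegrand (ι := ι) γ s) := by
  rw [← integrable_comp_smul_iff volume _ (Real.sqrt_pos.2 hs).ne']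
  simpa only [deformedMehtaIntegrand_smul γ hs] using
    (integrable_aomotoIntegrand hγ le_rfl zero_le_one h (γ * s) ∅).const_mul _

lemma tendsto_deformedMehtaIntegrand (γ : ℝ) (x : ι → ℝ) :
    Tendsto (fun s ↦ deformedMehtaIntegrand γ s x) atTop (𝓝 (mehtaIntegrand γ x : ℂ)) := by
  have h := (tendsto_finsetProd Finset.univ fun j _ ↦ tendsto_deformedGaussian γ (x j)).const_mul
    (regVandermonde γ 0 x : ℂ)
  simpa only [deformedMehtaIntegrand, mehtaIntegrand, Complex.ofReal_mul, Complex.ofReal_prod]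
    using h

lemma norm_deformedMehtaIntegrand_anti {γ s s' : ℝ} (hγ : 0 ≤ γ) (hs : 0 < s) (h : s ≤ s')
    (x : ι → ℝ) : ‖deformedMehtaIntegrand γ s' x‖ ≤ ‖deformedMehtaIntegrand γ s x‖ := by
  simp only [deformedMehtaIntegrand, norm_mul, norm_prod]
  gcongr with j
  exact norm_deformedGaussian_anti hγ hs h (x j)

lemma mehtaIntegrand_le_norm_deformedMehtaIntegrand {γ s : ℝ} (hγ : 0 ≤ γ) (hs : 0 < s)
    (x : ι → ℝ) : mehtaIntegrand γ x ≤ ‖deformedMehtaIntegrand γ s x‖ := by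
  have h := le_of_tendsto (tendsto_deformedMehtaIntegrand γ x).norm <|
    (eventually_ge_atTop s).mono fun s' hs' ↦ norm_deformedMehtaIntegrand_anti hγ hs hs' x
  rwa [Complex.norm_real, Real.norm_of_nonneg (mehtaIntegrand_nonneg γ x)] at h

lemma exists_integrable_deformedMehtaIntegrand (ι : Type*) [Fintype ι] [DecidableEq ι] {γ : ℝ}
    (hγ : 0 < γ) : ∃ s > 0, Integrable (deformedMehtaIntegrand (ι := ι) γ s) := by
  obtain ⟨s, hs0, hs⟩ := ((eventually_gt_atTop 0).and
    ((tendsto_id.const_mul_atTop hγ).eventually_gt_atTop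
      (2 + 2 * γ * (Fintype.card ι - 1)))).exists
  exact ⟨s, hs0, integrable_deformedMehtaIntegrand hγ.le hs0 hs⟩

lemma tendsto_integral_deformedMehtaIntegrand (ι : Type*) [Fintype ι] [DecidableEq ι] {γ : ℝ}
    (hγ : 0 < γ) :
    Tendsto (fun s ↦ ∫ x : ι → ℝ, deformedMehtaIntegrand γ s x) atTop
      (𝓝 (∫ x : ι → ℝ, mehtaIntegrand γ x : ℝ)) := by
  obtain ⟨s₀, hs₀, hint⟩ := exists_integrable_deformedMehtaIntegrand ι hγ
  rw [← integral_complex_ofReal]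
  refine tendsto_integral_filter_of_dominated_convergence _
    (.of_forall fun s ↦ (continuous_deformedMehtaIntegrand hγ.le s).aestronglyMeasurable) ?_
    hint.norm (.of_forall (tendsto_deformedMehtaIntegrand γ))
  filter_upwards [eventually_ge_atTop s₀] with s hs
  exact .of_forall (norm_deformedMehtaIntegrand_anti hγ.le hs₀ hs)

lemma regVandermonde_pos_of_injective (γ : ℝ) {x : ι → ℝ} (hx : Function.Injective x) :
    0 < regVandermonde γ 0 x := by
  refine Finset.prod_pos fun i _ ↦ Finset.prod_pos fun j hj ↦ Real.rpow_pos_of_pos ?_ _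
  have hij : x j - x i ≠ 0 := sub_ne_zero.2 (hx.ne (by simpa using hj))
  positivity

lemma integral_mehtaIntegrand_pos (ι : Type*) [Fintype ι] [DecidableEq ι] {γ : ℝ} (hγ : 0 < γ) :
    0 < ∫ x : ι → ℝ, mehtaIntegrand γ x := by
  obtain ⟨s, hs, hdeformed⟩ := exists_integrable_deformedMehtaIntegrand ι hγ
  have hcont := continuous_mehtaIntegrand (ι := ι) hγ.le
  have hint : Integrable (mehtaIntegrand (ι := ι) γ) :=
    hdeformed.mono hcont.aestronglyMeasurable <| .of_forall fun x ↦
      (Real.norm_of_nonneg (mehtaIntegrand_nonneg γ x)).trans_le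
        (mehtaIntegrand_le_norm_deformedMehtaIntegrand hγ.le hs x)
  obtain ⟨x, hx⟩ : ∃ x : ι → ℝ, Function.Injective x :=
    ⟨fun i ↦ (Fintype.equivFin ι i : ℕ),
      Nat.cast_injective.comp (Fin.val_injective.comp (Fintype.equivFin ι).injective)⟩
  rw [integral_pos_iff_support_of_nonneg (mehtaIntegrand_nonneg γ) hint]
  exact hcont.isOpen_support.measure_pos _
    ⟨x, (mul_pos (regVandermonde_pos_of_injective γ hx) (by positivity)).ne'⟩

/-- The factor in the recurrence `f s = recurrenceFactor γ N s * f (s + γ⁻¹)` which `W γ N s⁻¹` and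
its closed form have in common. -/
noncomputable def recurrenceFactor (γ : ℝ) (N : ℕ) (s : ℝ) : ℝ :=
  (s / (s + γ⁻¹)) ^ (N / 2 - γ * (N * (N - 1)) / 2 + N * (γ * s)) * Real.exp N *
    ∏ k ∈ Finset.range N, (1 - k / s)

lemma integral_deformedMehtaIntegrand_eq_mul {γ s : ℝ} (hγ : 0 < γ) (hs : 0 < s)
    (h : 1 + 2 * γ * (Fintype.card ι - 1) < γ * s) :
    ∫ x : ι → ℝ, deformedMehtaIntegrand γ s x =
      recurrenceFactor γ (Fintype.card ι) s *
        ∫ x : ι → ℝ, deformedMehtaIntegrand γ (s + γ⁻¹) x := by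
  have hs' : 0 < s + γ⁻¹ := by positivity
  have hα : γ * (s + γ⁻¹) = γ * s + 1 := by rw [mul_add, mul_inv_cancel₀ hγ.ne']
  have hratio : γ * s / (γ * s + 1) = s / (s + γ⁻¹) := by
    rw [← hα, mul_div_mul_left _ _ hγ.ne']
  have hprod : ∏ k ∈ Finset.range (Fintype.card ι), (1 - γ * k / (γ * s)) =
      ∏ k ∈ Finset.range (Fintype.card ι), (1 - k / s) :=
    Finset.prod_congr rfl fun k _ ↦ by rw [mul_div_mul_left _ _ hγ.ne']
  have hsqrt (p : ℝ) : √s ^ p = (s / (s + γ⁻¹)) ^ (p / 2) * √(s + γ⁻¹) ^ p := by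
    rw [Real.sqrt_eq_rpow, Real.sqrt_eq_rpow, ← Real.rpow_mul hs.le, ← Real.rpow_mul hs'.le,
      Real.div_rpow hs.le hs'.le, one_div_mul_eq_div, div_mul_cancel₀]
    positivity
  have hexp : Real.exp (-(γ * s)) ^ Fintype.card ι =
      Real.exp (Fintype.card ι) * Real.exp (-(γ * s + 1)) ^ Fintype.card ι := by
    rw [← Real.exp_nat_mul, ← Real.exp_nat_mul, ← Real.exp_add]
    ring_nf
  have hexponent : Fintype.card ι / 2 - γ * (Fintype.card ι * (Fintype.card ι - 1)) / 2 +
      Fintype.card ι * (γ * s) =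
      (Fintype.card ι + γ * (Fintype.card ι * (Fintype.card ι - 1))) / 2 +
        Fintype.card ι * (γ * s - γ * (Fintype.card ι - 1)) := by ring
  rw [integral_deformedMehtaIntegrand γ hs, integral_deformedMehtaIntegrand γ hs', hα,
    aomotoIntegral_self_eq_mul_add_one hγ (by positivity) h, hratio, hprod, hsqrt, hexp,
    recurrenceFactor, hexponent, Real.rpow_add (x := s / (s + γ⁻¹)) (by positivity)]
  push_cast
  ring

end

/-! ### The recurrence for `W` -/

section

open Filter Topology

lemma prod_prod_Ioi_abs_sub_rpow (γ : ℝ) {N : ℕ} (x : Fin N → ℝ) :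
    ∏ i, ∏ j ∈ Finset.Ioi i, |x j - x i| ^ (2 * γ) = regVandermonde γ 0 x := by
  rw [regVandermonde, ← Finset.prod_prod_Ioi_mul_eq_prod_prod_off_diag
    fun j i ↦ ((x j - x i) ^ 2 + 0) ^ (γ / 2)]
  refine Finset.prod_congr rfl fun i _ ↦ Finset.prod_congr rfl fun j _ ↦ ?_
  rw [sub_sq_comm (x i), add_zero, ← sq_abs, ← Real.rpow_natCast, ← Real.rpow_mul (abs_nonneg _),
    ← sq, ← Real.rpow_natCast, ← Real.rpow_mul (abs_nonneg _)]
  push_cast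
  ring_nf

lemma W_eq_integral_div_integral (γ : ℝ) (N : ℕ) {t : ℝ} (ht : 0 < t) :
    W γ N t = (∫ x : Fin N → ℝ, deformedMehtaIntegrand γ t⁻¹ x) /
      (∫ x : Fin N → ℝ, mehtaIntegrand γ x : ℝ) := by
  simp only [W, deformedMehtaIntegrand, mehtaIntegrand, deformedGaussian_inv γ ht,
    ← prod_prod_Ioi_abs_sub_rpow, Complex.ofReal_prod, Finset.mul_sum, Real.exp_sum]

lemma tendsto_W_inv_atTop {γ : ℝ} (hγ : 0 < γ) (N : ℕ) :
    Tendsto (fun s ↦ W γ N s⁻¹) atTop (𝓝 1) := by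
  have hpos : ((∫ x : Fin N → ℝ, mehtaIntegrand γ x : ℝ) : ℂ) ≠ 0 :=
    Complex.ofReal_ne_zero.2 (integral_mehtaIntegrand_pos (Fin N) hγ).ne'
  have h := (tendsto_integral_deformedMehtaIntegrand (Fin N) hγ).div_const
    ((∫ x : Fin N → ℝ, mehtaIntegrand γ x : ℝ) : ℂ)
  rw [div_self hpos] at h
  refine h.congr' ?_
  filter_upwards [eventually_gt_atTop 0] with s hs
  rw [W_eq_integral_div_integral γ N (inv_pos.2 hs), inv_inv]

lemma W_inv_eq_mul_W_inv_add {γ s : ℝ} {N : ℕ} (hγ : 0 < γ) (hs : 0 < s)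
    (h : 2 * (N - 1) + γ⁻¹ < s) :
    W γ N s⁻¹ = recurrenceFactor γ N s * W γ N (s + γ⁻¹)⁻¹ := by
  have hγs : 1 + 2 * γ * (N - 1) < γ * s :=
    calc 1 + 2 * γ * (N - 1) = γ * (2 * (N - 1) + γ⁻¹) := by field_simp; ring
      _ < γ * s := mul_lt_mul_of_pos_left h hγ
  have hrec := integral_deformedMehtaIntegrand_eq_mul (ι := Fin N) hγ hs (by simpa using hγs)
  rw [Fintype.card_fin] at hrec
  rw [W_eq_integral_div_integral γ N (inv_pos.2 hs),
    W_eq_integral_div_integral γ N (by positivity : 0 < (s + γ⁻¹)⁻¹), inv_inv, inv_inv, hrec,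
    mul_div_assoc]

end

/-! ### Stirling's approximation -/

section

open Filter Topology

/-- Stirling's approximation of `Γ(s + 1)` divided by `Γ(s + 1)`. -/
noncomputable def stirlingRatio (s : ℝ) : ℝ :=
  √(2 * Real.pi) * s ^ (s + 1 / 2) * Real.exp (-s) / Real.Gamma (s + 1)

lemma sqrt_div_Gamma_mul_eq_stirlingRatio_inv {t : ℝ} (ht : 0 < t) :
    √(2 * Real.pi * t) / (Real.Gamma (1 / t) * (Real.exp 1 * t) ^ (1 / t)) =
      stirlingRatio t⁻¹ := by
  obtain ⟨s, rfl⟩ : ∃ s, t = s⁻¹ := ⟨t⁻¹, (inv_inv t).symm⟩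
  have hs : 0 < s := inv_pos.1 ht
  have hΓ := (Real.Gamma_pos_of_pos hs).ne'
  rw [one_div, inv_inv, stirlingRatio, Real.Gamma_add_one hs.ne', Real.rpow_add hs,
    ← Real.sqrt_eq_rpow, Real.sqrt_mul (by positivity), Real.sqrt_inv,
    Real.mul_rpow (Real.exp_nonneg 1) (by positivity), Real.exp_one_rpow, Real.inv_rpow hs.le,
    Real.exp_neg]
  have hsq := Real.sq_sqrt hs.le
  field_simp [hΓ]
  exact hsq.symm

lemma Gamma_add_natCast {s : ℝ} (hs : 0 < s) (n : ℕ) :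
    Real.Gamma (s + n) = Real.Gamma s * ∏ j ∈ Finset.range n, (s + j) := by
  induction n with
  | zero => simp
  | succ n ih =>
    rw [Nat.cast_succ, ← add_assoc, Real.Gamma_add_one (by positivity), ih,
      Finset.prod_range_succ]
    ring

lemma Gamma_add_natCast_add_one {s : ℝ} (hs : 0 < s) (n : ℕ) :
    Real.Gamma (s + n + 1) =
      Real.Gamma (s + 1) * ((s + n) ^ n * ∏ j ∈ Finset.range n, (1 - j / (s + n))) := by
  rw [add_right_comm, Gamma_add_natCast (by positivity), ← Finset.prod_range_reflect,
    Finset.pow_eq_prod_const, ← Finset.prod_mul_distrib]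
  refine congrArg _ (Finset.prod_congr rfl fun j hj ↦ ?_)
  have hj' : j + 1 ≤ n := Finset.mem_range.1 hj
  rw [Nat.sub_sub, Nat.cast_sub (by omega)]
  push_cast
  field_simp
  ring

lemma stirlingRatio_eq_mul_stirlingRatio_add {s : ℝ} (hs : 0 < s) (n : ℕ) :
    stirlingRatio s = (s / (s + n)) ^ (s + 1 / 2) * Real.exp n *
      (∏ j ∈ Finset.range n, (1 - j / (s + n))) * stirlingRatio (s + n) := by
  have hsn : 0 < s + n := by positivity
  have hexp : Real.exp (-s) = Real.exp n * Real.exp (-(s + n)) := by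
    rw [← Real.exp_add]
    ring_nf
  have hpow : (s + n) ^ (s + n + 1 / 2) = (s + n) ^ (s + 1 / 2) * (s + n) ^ n := by
    rw [add_right_comm, Real.rpow_add_natCast hsn.ne']
  have hprod : ∏ j ∈ Finset.range n, (1 - j / (s + n)) ≠ 0 := by
    refine Finset.prod_ne_zero_iff.2 fun j hj ↦ ?_
    have hj' : (j : ℝ) < n := Nat.cast_lt.2 (Finset.mem_range.1 hj)
    exact (sub_pos.2 ((div_lt_one hsn).2 (by linarith))).ne'
  have hΓ := (Real.Gamma_pos_of_pos (by positivity : 0 < s + 1)).ne'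
  rw [stirlingRatio, stirlingRatio, Gamma_add_natCast_add_one hs, hpow, hexp,
    Real.div_rpow hs.le hsn.le]
  generalize ∏ j ∈ Finset.range n, (1 - j / (s + n)) = P at hprod ⊢
  field_simp [hΓ]

lemma tendsto_rpow_mul_factorial_div_Gamma {s : ℝ} (hs : 0 < s) :
    Tendsto (fun n : ℕ ↦ (n : ℝ) ^ s * n.factorial / Real.Gamma (s + n + 1)) atTop (𝓝 1) := by
  have hΓ := (Real.Gamma_pos_of_pos hs).ne'
  have h := (Real.GammaSeq_tendsto_Gamma s).div_const (Real.Gamma s)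
  rw [div_self hΓ] at h
  refine h.congr fun n ↦ ?_
  rw [Real.GammaSeq, div_div, mul_comm _ (Real.Gamma s), ← Gamma_add_natCast hs, Nat.cast_succ,
    add_assoc]

lemma tendsto_stirlingRatio_natCast : Tendsto (fun n : ℕ ↦ stirlingRatio n) atTop (𝓝 1) := by
  have h := (Asymptotics.isEquivalent_iff_tendsto_one
    (.of_forall fun n ↦ by positivity)).1 Stirling.factorial_isEquivalent_stirling.symm
  refine h.congr' ?_
  filter_upwards [eventually_gt_atTop 0] with n hn
  have hn' : (0 : ℝ) < n := Nat.cast_pos.2 hn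
  rw [stirlingRatio, Real.Gamma_nat_eq_factorial, Real.rpow_add hn', Real.rpow_natCast,
    ← Real.sqrt_eq_rpow, Pi.div_apply, div_pow, Real.exp_one_pow, Real.exp_neg,
    mul_right_comm 2 (n : ℝ), Real.sqrt_mul (by positivity)]
  ring

lemma stirlingRatio_add_natCast {s : ℝ} (hs : 0 < s) {n : ℕ} (hn : 0 < n) :
    stirlingRatio (s + n) = n ^ s * n.factorial / Real.Gamma (s + n + 1) * stirlingRatio n *
      ((1 + s / n) ^ (s + 1 / 2) * ((1 + s / n) ^ n * Real.exp (-s))) := by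
  have hn' : (0 : ℝ) < n := Nat.cast_pos.2 hn
  have hsn : 0 < s + n := by positivity
  have hratio : 1 + s / n = (s + n) / n := by field_simp; ring
  have hpow : (s + n) ^ (s + n + 1 / 2) = (s + n) ^ (s + 1 / 2) * (s + n) ^ n := by
    rw [add_right_comm, Real.rpow_add_natCast hsn.ne']
  have hfactorial : (n.factorial : ℝ) ≠ 0 := by positivity
  have hΓ := (Real.Gamma_pos_of_pos (by positivity : 0 < s + n + 1)).ne'
  rw [stirlingRatio, stirlingRatio, Real.Gamma_nat_eq_factorial, hratio,
    Real.div_rpow hsn.le hn'.le, div_pow, hpow, Real.rpow_add hn' s, Real.rpow_add hn' n,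
    Real.rpow_natCast, neg_add, Real.exp_add]
  field_simp [hΓ]

lemma tendsto_stirlingRatio_add_natCast {s : ℝ} (hs : 0 < s) :
    Tendsto (fun n : ℕ ↦ stirlingRatio (s + n)) atTop (𝓝 1) := by
  have hpow : Tendsto (fun n : ℕ ↦ (1 + s / n) ^ (s + 1 / 2)) atTop (𝓝 1) := by
    have h := (tendsto_const_div_atTop_nhds_zero_nat s).const_add 1
    simpa using h.rpow_const (p := s + 1 / 2) (Or.inl (by norm_num))
  have hexp : Tendsto (fun n : ℕ ↦ (1 + s / n) ^ n * Real.exp (-s)) atTop (𝓝 1) := by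
    simpa [← Real.exp_add] using (Real.tendsto_one_add_div_pow_exp s).mul_const (Real.exp (-s))
  have h := ((tendsto_rpow_mul_factorial_div_Gamma hs).mul tendsto_stirlingRatio_natCast).mul
    (hpow.mul hexp)
  simp only [mul_one] at h
  refine h.congr' ?_
  filter_upwards [eventually_gt_atTop 0] with n hn
  rw [stirlingRatio_add_natCast hs hn]

end

/-! ### The closed form -/

section

open Filter Topology

/-- The closed form of `W (1 / q) (q * K) t`, as a function of `s = 1 / t`. -/
noncomputable def closedForm (q K : ℕ) (s : ℝ) : ℝ :=
  stirlingRatio s ^ K * ∏ l ∈ Finset.range K, ∏ j ∈ Finset.range (q * (l + 1)), (1 - j / s)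

lemma prod_range_add_one_sub_div {s : ℝ} (hs : 0 < s) (q m : ℕ) :
    ∏ j ∈ Finset.range (q + m), (1 - j / (s + q)) =
      (∏ j ∈ Finset.range q, (1 - j / (s + q))) *
        ((s / (s + q)) ^ m * ∏ j ∈ Finset.range m, (1 - j / s)) := by
  rw [Finset.prod_range_add, Finset.pow_eq_prod_const, ← Finset.prod_mul_distrib]
  refine congrArg _ (Finset.prod_congr rfl fun j _ ↦ ?_)
  push_cast
  field_simp
  ring

lemma prod_range_pow_mul {r : ℝ} (hr : 0 < r) (q K : ℕ) :
    ∏ l ∈ Finset.range K, r ^ (q * l) = r ^ (q * (K * (K - 1)) / 2 : ℝ) := by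
  induction K with
  | zero => simp
  | succ K ih =>
    rw [Finset.prod_range_succ, ih, ← Real.rpow_natCast, ← Real.rpow_add hr]
    push_cast
    ring_nf

lemma prod_prod_range_one_sub_div_mul {s : ℝ} (hs : 0 < s) (q K : ℕ) :
    (∏ j ∈ Finset.range q, (1 - j / (s + q))) ^ K * (s / (s + q)) ^ (q * (K * (K - 1)) / 2 : ℝ) *
        ∏ l ∈ Finset.range K, ∏ j ∈ Finset.range (q * (l + 1)), (1 - j / s) =
      (∏ j ∈ Finset.range (q * K), (1 - j / s)) *
        ∏ l ∈ Finset.range K, ∏ j ∈ Finset.range (q * (l + 1)), (1 - j / (s + q)) := by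
  have htelescope : ∏ l ∈ Finset.range K, ∏ j ∈ Finset.range (q * (l + 1)), (1 - j / s) =
      (∏ l ∈ Finset.range K, ∏ j ∈ Finset.range (q * l), (1 - j / s)) *
        ∏ j ∈ Finset.range (q * K), (1 - j / s) := by
    rw [← Finset.prod_range_succ fun l ↦ ∏ j ∈ Finset.range (q * l), (1 - j / s),
      Finset.prod_range_succ', Nat.mul_zero, Finset.prod_range_zero, mul_one]
  rw [htelescope, ← prod_range_pow_mul (by positivity) q K]
  simp only [Nat.mul_succ, Nat.add_comm _ q, prod_range_add_one_sub_div hs, Finset.prod_mul_distrib,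
    Finset.prod_const, Finset.card_range]
  ring

lemma closedForm_eq_mul_closedForm_add {q : ℕ} (hq : 0 < q) (K : ℕ) {s : ℝ} (hs : 0 < s) :
    closedForm q K s = recurrenceFactor (1 / q) (q * K : ℕ) s * closedForm q K (s + q) := by
  have hq' : (0 : ℝ) < q := Nat.cast_pos.2 hq
  have hr : 0 < s / (s + q) := div_pos hs (add_pos hs hq')
  have hexponent : ((q * K : ℕ) : ℝ) / 2 - 1 / q * ((q * K : ℕ) * ((q * K : ℕ) - 1)) / 2 +
      (q * K : ℕ) * (1 / q * s) = (s + 1 / 2) * K - q * (K * (K - 1)) / 2 := by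
    push_cast
    field_simp
    ring
  have hexp : Real.exp (q * K : ℕ) = Real.exp q ^ K := by
    rw [← Real.exp_nat_mul, Nat.cast_mul, mul_comm]
  rw [recurrenceFactor, one_div, inv_inv, ← one_div, hexponent, hexp, Real.rpow_sub hr,
    Real.rpow_mul hr.le, Real.rpow_natCast, closedForm, closedForm,
    stirlingRatio_eq_mul_stirlingRatio_add hs q]
  have hcancel := mul_inv_cancel₀ (Real.rpow_pos_of_pos hr (q * (K * (K - 1)) / 2)).ne'
  have hprod := prod_prod_range_one_sub_div_mul hs q K
  linear_combination ((s / (s + q)) ^ (s + 1 / 2)) ^ K * Real.exp q ^ K *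
    stirlingRatio (s + q) ^ K *
      (((s / (s + q)) ^ (q * (K * (K - 1)) / 2 : ℝ))⁻¹ * hprod -
        (∏ j ∈ Finset.range q, (1 - j / (s + q))) ^ K *
          (∏ l ∈ Finset.range K, ∏ j ∈ Finset.range (q * (l + 1)), (1 - j / s)) * hcancel)

lemma tendsto_closedForm_add_mul {q : ℕ} (hq : 0 < q) (K : ℕ) {s : ℝ} (hs : 0 < s) :
    Tendsto (fun n : ℕ ↦ closedForm q K (s + q * n)) atTop (𝓝 1) := by
  have hstirling : Tendsto (fun n : ℕ ↦ stirlingRatio (s + q * n)) atTop (𝓝 1) := by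
    simpa [Function.comp_def] using
      (tendsto_stirlingRatio_add_natCast hs).comp (tendsto_id.const_mul_atTop' hq)
  have hatTop := tendsto_add_mul_natCast_atTop (Nat.cast_pos (α := ℝ).2 hq) s
  have hprod := tendsto_finsetProd (Finset.range K) fun l _ ↦
    tendsto_finsetProd (Finset.range (q * (l + 1))) fun j _ ↦
      (hatTop.const_div_atTop (j : ℝ)).const_sub 1
  simpa [closedForm] using (hstirling.pow K).mul hprod

lemma prod_Icc_one_sub_mul_inv (s : ℝ) (m : ℕ) :
    ∏ j ∈ Finset.Icc 1 m, (1 - j * s⁻¹) =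
      (∏ j ∈ Finset.range m, (1 - j / s)) * (1 - m * s⁻¹) := by
  induction m with
  | zero => simp
  | succ m ih =>
    rw [Finset.prod_Icc_succ_top (by omega), ih, Finset.prod_range_succ, div_eq_mul_inv]

lemma prod_prod_Icc_div_prod_Icc {q K : ℕ} {s : ℝ} (hs : 0 < s) (h : (q : ℝ) * K < s) :
    (∏ l ∈ Finset.Icc 1 K, ∏ j ∈ Finset.Icc 1 (q * l), (1 - j * s⁻¹)) /
        ∏ j ∈ Finset.Icc 1 K, (1 - s⁻¹ * q * j) =
      ∏ l ∈ Finset.range K, ∏ j ∈ Finset.range (q * (l + 1)), (1 - j / s) := by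
  have hne (l : ℕ) (hl : l ≤ K) : 1 - s⁻¹ * q * l ≠ 0 := by
    have hql : (q : ℝ) * l ≤ q * K := by gcongr
    rw [mul_assoc, inv_mul_eq_div]
    exact (sub_pos.2 ((div_lt_one hs).2 (hql.trans_lt h))).ne'
  rw [← Finset.prod_div_distrib, Finset.range_eq_Ico,
    Finset.prod_Ico_add' (fun l ↦ ∏ j ∈ Finset.range (q * l), (1 - j / s)) 0 K 1, zero_add,
    Finset.Ico_add_one_right_eq_Icc]
  refine Finset.prod_congr rfl fun l hl ↦ ?_
  rw [div_eq_iff (hne l (Finset.mem_Icc.1 hl).2), prod_Icc_one_sub_mul_inv, Nat.cast_mul,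
    mul_comm (_ * _) s⁻¹, mul_assoc]

lemma closedForm_inv {q K : ℕ} {t : ℝ} (ht : 0 < t) (h : (q : ℝ) * K < t⁻¹) :
    (√(2 * Real.pi * t) / (Real.Gamma (1 / t) * (Real.exp 1 * t) ^ (1 / t))) ^ K *
          (∏ l ∈ Finset.Icc 1 K, ∏ j ∈ Finset.Icc 1 (q * l), (1 - (j : ℝ) * t)) /
        ∏ j ∈ Finset.Icc 1 K, (1 - t * q * j) =
      closedForm q K t⁻¹ := by
  have hprod := prod_prod_Icc_div_prod_Icc (inv_pos.2 ht) h
  rw [inv_inv] at hprod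
  rw [mul_div_assoc, sqrt_div_Gamma_mul_eq_stirlingRatio_inv ht, hprod, closedForm]

lemma W_one_div_inv_eq_closedForm {q K : ℕ} (hq : 0 < q) {s : ℝ} (hs : 0 < s)
    (h : 2 * ((q : ℝ) * K - 1) + q < s) : W (1 / q) (q * K) s⁻¹ = closedForm q K s := by
  have hq' : (0 : ℝ) < q := Nat.cast_pos.2 hq
  have hW (n : ℕ) : W (1 / q) (q * K) (s + q * n)⁻¹ =
      recurrenceFactor (1 / q) (q * K) (s + q * n) *
        W (1 / q) (q * K) (s + q * (n + 1 : ℕ))⁻¹ := by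
    have hqn : 0 ≤ (q : ℝ) * n := by positivity
    have hdomain : 2 * (((q * K : ℕ) : ℝ) - 1) + (1 / (q : ℝ))⁻¹ < s + q * n := by
      rw [one_div, inv_inv, Nat.cast_mul]
      linarith
    rw [W_inv_eq_mul_W_inv_add (by positivity) (by positivity) hdomain, one_div, inv_inv,
      Nat.cast_succ, mul_add_one, add_assoc]
  have hclosed (n : ℕ) : (closedForm q K (s + q * n) : ℂ) =
      recurrenceFactor (1 / q) (q * K) (s + q * n) * closedForm q K (s + q * (n + 1 : ℕ)) := by
    rw [closedForm_eq_mul_closedForm_add hq K (by positivity), Complex.ofReal_mul, Nat.cast_succ,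
      mul_add_one, add_assoc]
  have hWlim := (tendsto_W_inv_atTop (by positivity : (0 : ℝ) < 1 / q) (q * K)).comp
    (tendsto_add_mul_natCast_atTop hq' s)
  have hclosedlim :=
    (Complex.continuous_ofReal.tendsto 1).comp (tendsto_closedForm_add_mul hq K hs)
  simpa using eq_of_forall_eq_mul_succ_of_tendsto_one hW hclosed hWlim hclosedlim

end

/-- For positive integers `q, K` and `t > 0` with `1/t > 2(qK-1) + q`:
`W_{1/q}(qK, t) = (√(2πt)/(Γ(1/t)(et)^{1/t}))^K
   ⬝ (∏_{l=1}^{K} ∏_{j=1}^{ql} (1 - jt)) / ∏_{j=1}^{K} (1 - tqj)`. -/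
theorem stmt6 (q K : ℕ) (hq : 0 < q) (hK : 0 < K) (t : ℝ) (ht : 0 < t)
    (hconv : 2 * ((q : ℝ) * K - 1) + q < 1 / t) :
    W (1 / q) (q * K) t =
      (((Real.sqrt (2 * Real.pi * t) /
            (Real.Gamma (1 / t) * (Real.exp 1 * t) ^ (1 / t))) ^ K *
          (∏ l ∈ Finset.Icc 1 K, ∏ j ∈ Finset.Icc 1 (q * l), (1 - (j : ℝ) * t)) /
          ∏ j ∈ Finset.Icc 1 K, (1 - t * q * j) : ℝ) : ℂ) := by
  have hq' : (1 : ℝ) ≤ q := Nat.one_le_cast.2 hq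
  have hqK : (1 : ℝ) ≤ (q : ℝ) * K := one_le_mul_of_one_le_of_one_le hq' (Nat.one_le_cast.2 hK)
  rw [one_div] at hconv
  rw [closedForm_inv ht (by linarith), ← W_one_div_inv_eq_closedForm hq (inv_pos.2 ht) hconv,
    inv_inv]
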